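/- arXiv:1511.08020 — 3 statements merged into one kernel-verified Lean document; each statement's English description precedes it below -/
import Mathlib

section
/- (Type covering lemma) For any distortion measure d on X × Y with ∀x ∃y d(x,y)=0, any δ > 0, there exists n₀ such that for all n ≥ n₀, every type Q of length-n sequences over X, and every D ≥ 0, there exists a set B ⊆ Y^n with (1/n) log|B| ≤ R(D,Q) + δ and such that every x^n in the type class T_Q^n satisfies min_{y^n ∈ B} d^(n)(x^n, y^n) ≤ D. -/
open scoped BigOperators

/-- A probability distribution on a finite alphabet. -/
def IsProbDist {X : Type*} [Fintype X] (p : X → ℝ) : Prop :=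
  (∀ x, 0 ≤ p x) ∧ ∑ x, p x = 1

/-- Relative entropy (KL divergence), natural log, convention 0 log 0 = 0. -/
noncomputable def klDiv {X : Type*} [Fintype X] (Q P : X → ℝ) : ℝ :=
  ∑ x, Q x * Real.log (Q x / P x)

/-- Mutual information of the joint law Q(x)W(y|x). -/
noncomputable def mutualInfo {X Y : Type*} [Fintype X] [Fintype Y]
    (Q : X → ℝ) (W : X → Y → ℝ) : ℝ :=
  ∑ x, ∑ y, Q x * W x y * Real.log (W x y / (∑ x', Q x' * W x' y))

/-- Rate-distortion function `R(D,Q)`. -/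
noncomputable def rateDistortion {X Y : Type*} [Fintype X] [Fintype Y]
    (d : X → Y → ℝ) (D : ℝ) (Q : X → ℝ) : ℝ :=
  sInf {r | ∃ W : X → Y → ℝ, (∀ x y, 0 ≤ W x y) ∧ (∀ x, ∑ y, W x y = 1) ∧
    (∑ x, ∑ y, Q x * W x y * d x y) ≤ D ∧ r = mutualInfo Q W}

/-- Per-symbol mean distortion between two length-n sequences. -/
noncomputable def meanDist {X Y : Type*} (d : X → Y → ℝ) {n : ℕ}
    (x : Fin n → X) (y : Fin n → Y) : ℝ :=
  (1 / (n : ℝ)) * ∑ i, d (x i) (y i)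

/-- Empirical distribution (type) of a sequence. -/
noncomputable def empDist {X : Type*} [Fintype X] [DecidableEq X] {n : ℕ}
    (x : Fin n → X) (a : X) : ℝ :=
  ((Finset.univ.filter (fun i => x i = a)).card : ℝ) / n

/-- Counting function of an adversarial strategy list: 1-based index of the
first guess within mean distortion `D` of `x` (0 if none exists). -/
noncomputable def countG {X Y : Type*} (d : X → Y → ℝ) (D : ℝ) {n : ℕ}
    (S : List (Fin n → Y)) (x : Fin n → X) : ℕ :=
  sInf {j : ℕ | ∃ y ∈ S.take j, meanDist d x y ≤ D}

/-- n-fold product (i.i.d.) distribution. -/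
noncomputable def prodDist {X : Type*} (P : X → ℝ) {n : ℕ} (x : Fin n → X) : ℝ :=
  ∏ i, P (x i)

theorem log_factorial_ge (k : ℕ) : k * Real.log k - k ≤ Real.log k.factorial := by
  rcases Nat.eq_zero_or_pos k with rfl | hk
  · simp
  have hk' : (0 : ℝ) < k := by exact_mod_cast hk
  have h := Real.pow_div_factorial_le_exp (k : ℝ) hk'.le k
  have hf : (0 : ℝ) < k.factorial := by exact_mod_cast k.factorial_pos
  have h2 := Real.log_le_log (by positivity) h
  rw [Real.log_exp, Real.log_div (by positivity) hf.ne', Real.log_pow] at h2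
  linarith

theorem log_factorial_le (k : ℕ) :
    Real.log k.factorial ≤ k * Real.log k - k + (1 + Real.log (k + 1)) := by
  rcases Nat.eq_zero_or_pos k with rfl | hk
  · simp
  suffices h : Real.log k.factorial ≤ k * Real.log k - k + (1 + Real.log k) by
    have : Real.log k ≤ Real.log (k + 1) :=
      Real.log_le_log (by exact_mod_cast hk) (by linarith)
    linarith
  induction k, hk using Nat.le_induction with
  | base => simp
  | succ m hm ih =>
    have hm' : (0 : ℝ) < m := by exact_mod_cast hm
    rw [Nat.factorial_succ, Nat.cast_mul, Real.log_mul (by positivity) (by positivity)]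
    push_cast
    have h := Real.log_le_sub_one_of_pos (x := (m : ℝ) / (m + 1)) (by positivity)
    rw [Real.log_div (by positivity) (by positivity)] at h
    have h2 : (m : ℝ) / (m + 1) - 1 = -(1 / (m + 1)) := by field_simp; ring
    rw [h2] at h
    have h3 := mul_le_mul_of_nonneg_left h (by positivity : (0 : ℝ) ≤ m + 1)
    have h4 : ((m : ℝ) + 1) * -(1 / (m + 1)) = -1 := by field_simp
    rw [h4] at h3
    nlinarith

theorem exists_cover {α β : Type*} [Fintype β] [Nonempty β] [DecidableEq β]
    (r : α → β → Prop) [∀ a b, Decidable (r a b)] (S : Finset α) (p : ℝ) (hp1 : p ≤ 1)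
    (hp : ∀ a ∈ S, p * Fintype.card β ≤ (Finset.univ.filter (r a)).card) (M : ℕ) :
    ∃ C : Finset β, C.card ≤ M ∧
      ((S.filter fun a => ∀ b ∈ C, ¬ r a b).card : ℝ) ≤ (1 - p) ^ M * S.card := by
  induction M with
  | zero => exact ⟨∅, by simp⟩
  | succ M ih =>
    obtain ⟨C, hC, hU⟩ := ih
    set U := S.filter fun a => ∀ b ∈ C, ¬ r a b with hUdef
    have hcount : ∑ b : β, p * (U.card : ℝ) ≤ ∑ b : β, ((U.filter fun a => r a b).card : ℝ) := by
      have h1 : ∑ b : β, ((U.filter fun a => r a b).card : ℝ)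
          = ∑ a ∈ U, ((Finset.univ.filter (r a)).card : ℝ) := by
        exact_mod_cast (Finset.sum_card_bipartiteAbove_eq_sum_card_bipartiteBelow r
          (s := U) (t := Finset.univ)).symm
      rw [h1]
      calc ∑ b : β, p * (U.card : ℝ) = ∑ a ∈ U, p * Fintype.card β := by
            simp; ring
        _ ≤ _ := Finset.sum_le_sum fun a ha => hp a (Finset.mem_filter.1 ha).1
    obtain ⟨b, -, hb⟩ := Finset.exists_le_of_sum_le Finset.univ_nonempty hcount
    refine ⟨insert b C, (Finset.card_insert_le _ _).trans (by omega), ?_⟩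
    have hfil : (S.filter fun a => ∀ b' ∈ insert b C, ¬ r a b') = U.filter fun a => ¬ r a b := by
      ext a; simp [hUdef]; tauto
    have hsplit := Finset.card_filter_add_card_filter_not (s := U) (fun a => r a b)
    rw [hfil]
    have hsplit' : ((U.filter fun a => r a b).card : ℝ)
        + ((U.filter fun a => ¬ r a b).card : ℝ) = U.card := by exact_mod_cast hsplit
    calc ((U.filter fun a => ¬ r a b).card : ℝ) ≤ (1 - p) * U.card := by linarith
      _ ≤ (1 - p) * ((1 - p) ^ M * S.card) := mul_le_mul_of_nonneg_left hU (by linarith)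
      _ = _ := by ring

theorem apply_inv_of_comp_eq {α Z : Type*} {k : α → Z} {u : Equiv.Perm α} (hu : k ∘ u = k)
    (i : α) : k (u⁻¹ i) = k i := by
  simpa using (congrFun hu (u⁻¹ i)).symm

theorem card_stabilizers_le {α X Y : Type*} [Fintype α] (f : α → X) (g : α → Y)
    (τ : Equiv.Perm α) :
    Nat.card {s : Equiv.Perm α // f ∘ s = f} * Nat.card {t : Equiv.Perm α // g ∘ t = g} ≤
      Nat.card {u : Equiv.Perm α // (fun i => (f i, g i)) ∘ u = fun i => (f i, g i)} *
      Nat.card {σ : Equiv.Perm α //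
        ∃ ρ : Equiv.Perm α, f ∘ ρ = f ∘ τ ∧ g ∘ ρ = g ∘ σ} := by
  classical
  simp only [Nat.card_eq_fintype_card]
  rw [← Fintype.card_prod, ← Finset.card_univ, Fintype.card_subtype fun σ : Equiv.Perm α =>
    ∃ ρ : Equiv.Perm α, f ∘ ρ = f ∘ τ ∧ g ∘ ρ = g ∘ σ]
  let F : {s : Equiv.Perm α // f ∘ s = f} × {t : Equiv.Perm α // g ∘ t = g} → Equiv.Perm α :=
    fun q => q.2.1 * q.1.1 * τ
  refine (Finset.card_le_mul_card_image (f := F) Finset.univ _ ?_).trans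
    (Nat.mul_le_mul_left _ (Finset.card_le_card ?_))
  · intro σ hσ
    obtain ⟨⟨s, t⟩, -, rfl⟩ := Finset.mem_image.1 hσ
    rw [← Fintype.card_subtype]
    have key : ∀ q : {q // F q = F (s, t)}, q.1.1.1 * s.1⁻¹ = q.1.2.1⁻¹ * t.1 := by
      rintro ⟨⟨s', t'⟩, h⟩
      have h' : t'.1 * s'.1 = t.1 * s.1 := mul_right_cancel h
      rw [eq_inv_mul_iff_mul_eq, ← mul_assoc, h', mul_inv_cancel_right]
    refine Fintype.card_le_of_injective (fun q => ⟨q.1.1.1 * s.1⁻¹, ?_⟩) ?_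
    · funext i
      refine Prod.ext ?_ ?_
      · exact (congrFun q.1.1.2 (s.1⁻¹ i)).trans (apply_inv_of_comp_eq s.2 i)
      · simp only [key q]
        exact (apply_inv_of_comp_eq q.1.2.2 (t.1 i)).trans (congrFun t.2 i)
    · intro q q' hqq
      have h1 : q.1.1.1 * s.1⁻¹ = q'.1.1.1 * s.1⁻¹ := congrArg Subtype.val hqq
      have h2 := (key q).symm.trans (h1.trans (key q'))
      refine Subtype.ext (Prod.ext (Subtype.ext (mul_right_cancel h1)) (Subtype.ext ?_))
      exact inv_injective (mul_right_cancel h2)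
  · intro σ hσ
    obtain ⟨⟨s, t⟩, -, rfl⟩ := Finset.mem_image.1 hσ
    refine Finset.mem_filter.2 ⟨Finset.mem_univ _, s.1 * τ, ?_, ?_⟩
    · funext i; exact congrFun s.2 (τ i)
    · funext i; exact (congrFun t.2 (s.1 (τ i))).symm

theorem exists_cover_card_le {α β : Type*} [Fintype β] [Nonempty β] [DecidableEq β]
    (r : α → β → Prop) [∀ a b, Decidable (r a b)] (S : Finset α) {p K : ℝ} (hp0 : 0 < p)
    (hp1 : p ≤ 1) (hK : 0 < K) (hS : (S.card : ℝ) ≤ K)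
    (hlog : 0 ≤ Real.log K)
    (hp : ∀ a ∈ S, p * Fintype.card β ≤ (Finset.univ.filter (r a)).card) :
    ∃ C : Finset β, (C.card : ℝ) ≤ Real.log K / p + 1 ∧ ∀ a ∈ S, ∃ b ∈ C, r a b := by
  obtain ⟨C, hC, hU⟩ := exists_cover r S p hp1 hp (⌊Real.log K / p⌋₊ + 1)
  set M := ⌊Real.log K / p⌋₊ + 1 with hM
  have hfloor := Nat.floor_le (div_nonneg hlog hp0.le)
  have hlt : Real.log K < p * M := by
    have := Nat.lt_floor_add_one (Real.log K / p)
    rw [div_lt_iff₀ hp0] at this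
    rw [hM]; push_cast; linarith
  refine ⟨C, ?_, ?_⟩
  · have : (C.card : ℝ) ≤ M := by exact_mod_cast hC
    rw [hM] at this; push_cast at this; linarith
  · have hpow : (1 - p) ^ M ≤ Real.exp (-(p * M)) := by
      have h1 : 1 - p ≤ Real.exp (-p) := by linarith [Real.add_one_le_exp (-p)]
      calc (1 - p) ^ M ≤ Real.exp (-p) ^ M := pow_le_pow_left₀ (by linarith) h1 M
        _ = _ := by rw [← Real.exp_nat_mul]; congr 1; ring
    have hlt1 : ((S.filter fun a => ∀ b ∈ C, ¬ r a b).card : ℝ) < 1 := by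
      calc _ ≤ (1 - p) ^ M * S.card := hU
        _ ≤ Real.exp (-(p * M)) * K := mul_le_mul hpow hS (by positivity) (by positivity)
        _ < Real.exp (-Real.log K) * K := by gcongr
        _ = 1 := by rw [Real.exp_neg, Real.exp_log hK, inv_mul_cancel₀ hK.ne']
    have hzero : (S.filter fun a => ∀ b ∈ C, ¬ r a b) = ∅ := by
      rw [← Finset.card_eq_zero]
      exact Nat.lt_one_iff.1 (by exact_mod_cast hlt1)
    intro a ha
    by_contra! hcon
    exact Finset.notMem_empty a (hzero ▸ Finset.mem_filter.2 ⟨ha, hcon⟩)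

theorem log_card_stabilizer {α Z : Type*} [Fintype α] [DecidableEq α] [Fintype Z] [DecidableEq Z]
    (k : α → Z) :
    Real.log (Nat.card {s : Equiv.Perm α // k ∘ s = k})
      = ∑ z, Real.log (Fintype.card {i // k i = z}).factorial := by
  rw [Nat.card_eq_fintype_card, DomMulAct.stabilizer_card, Nat.cast_prod, Real.log_prod]
  intro z _
  exact_mod_cast (Nat.factorial_pos _).ne'

theorem exists_perm_orbit_cover {α X Y : Type*} [Fintype α] [Fintype X] [Nonempty X]
    [DecidableEq α] [DecidableEq X] [DecidableEq Y] [Fintype Y] (f : α → X) (g : α → Y) :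
    ∃ B : Finset (α → Y),
      Real.log B.card ≤ Real.log (Fintype.card α * Real.log (Fintype.card X) + 1) +
        (Real.log (Fintype.card α).factorial
          + ∑ q : X × Y, Real.log (Fintype.card {i // (f i, g i) = q}).factorial
          - ∑ a, Real.log (Fintype.card {i // f i = a}).factorial
          - ∑ b, Real.log (Fintype.card {i // g i = b}).factorial) ∧
      ∀ τ : Equiv.Perm α, ∃ y ∈ B, ∃ ρ : Equiv.Perm α, f ∘ ρ = f ∘ τ ∧ g ∘ ρ = y := by
  classical
  have hgood := card_stabilizers_le f g
  rw [← log_card_stabilizer f, ← log_card_stabilizer g,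
    ← log_card_stabilizer fun i => (f i, g i), ← Fintype.card_perm]
  have hX : (1 : ℝ) ≤ Fintype.card X := by exact_mod_cast Fintype.card_pos (α := X)
  have stab_pos : ∀ P : Equiv.Perm α → Prop, P 1 → (0 : ℝ) < Nat.card {s // P s} :=
    fun P h => by exact_mod_cast Nat.card_pos_iff.2 ⟨⟨(⟨1, h⟩ : {s // P s})⟩, inferInstance⟩
  have hsf := stab_pos (fun s => f ∘ s = f) rfl
  have hsg := stab_pos (fun s => g ∘ s = g) rfl
  have hsfg := stab_pos (fun s => (fun i => (f i, g i)) ∘ s = fun i => (f i, g i)) rfl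
  have hG : (0 : ℝ) < Fintype.card (Equiv.Perm α) := by exact_mod_cast Fintype.card_pos
  generalize Nat.card {s : Equiv.Perm α // f ∘ s = f} = sf at *
  generalize Nat.card {s : Equiv.Perm α // g ∘ s = g} = sg at *
  generalize Nat.card
    {u : Equiv.Perm α // (fun i => (f i, g i)) ∘ u = fun i => (f i, g i)} = sfg at *
  set p : ℝ := sf * sg / (sfg * Fintype.card (Equiv.Perm α)) with hp
  have hp0 : 0 < p := by positivity
  have hcount : ∀ τ : Equiv.Perm α, p * Fintype.card (Equiv.Perm α) ≤
      (Finset.univ.filter fun σ : Equiv.Perm α =>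
        ∃ ρ : Equiv.Perm α, f ∘ ρ = f ∘ τ ∧ g ∘ ρ = g ∘ σ).card := by
    intro τ
    have h : (sf * sg : ℝ) ≤ sfg * (Finset.univ.filter fun σ : Equiv.Perm α =>
        ∃ ρ : Equiv.Perm α, f ∘ ρ = f ∘ τ ∧ g ∘ ρ = g ∘ σ).card := by
      rw [← Fintype.card_subtype, ← Nat.card_eq_fintype_card]
      exact_mod_cast hgood τ
    have h2 : p * Fintype.card (Equiv.Perm α) = sf * sg / sfg := by rw [hp]; field_simp
    rw [h2, div_le_iff₀ hsfg]
    linarith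
  have hp1 : p ≤ 1 := by
    have h : p * Fintype.card (Equiv.Perm α) ≤ 1 * Fintype.card (Equiv.Perm α) := by
      rw [one_mul]
      refine (hcount 1).trans ?_
      exact_mod_cast Finset.card_le_univ _
    exact le_of_mul_le_mul_right h hG
  set K : ℝ := (Fintype.card X : ℝ) ^ Fintype.card α with hK
  have hlogK : Real.log K = Fintype.card α * Real.log (Fintype.card X) := by rw [hK, Real.log_pow]
  have hlogK0 : 0 ≤ Real.log K := Real.log_nonneg (one_le_pow₀ hX)
  obtain ⟨C, hC, hcov⟩ := exists_cover_card_le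
    (fun (x : α → X) (σ : Equiv.Perm α) => ∃ ρ : Equiv.Perm α, f ∘ ρ = x ∧ g ∘ ρ = g ∘ σ)
    (Finset.univ.image fun τ : Equiv.Perm α => f ∘ τ) (K := K) hp0 hp1 (by positivity)
    (by
      rw [hK]
      exact_mod_cast (Finset.card_le_univ _).trans_eq (by simp))
    hlogK0
    (by
      intro x hx
      obtain ⟨τ, -, rfl⟩ := Finset.mem_image.1 hx
      exact hcount τ)
  refine ⟨C.image fun σ : Equiv.Perm α => g ∘ σ, ?_, ?_⟩
  · have hBC : (((C.image fun σ : Equiv.Perm α => g ∘ σ).card : ℕ) : ℝ) ≤ (Real.log K + 1) / p := by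
      have h1 : (((C.image fun σ : Equiv.Perm α => g ∘ σ).card : ℕ) : ℝ) ≤ C.card := by
        exact_mod_cast Finset.card_image_le
      have h2 : 1 ≤ 1 / p := by rw [le_div_iff₀ hp0]; linarith
      rw [add_div]
      linarith
    have hlogp : -Real.log p = Real.log (Fintype.card (Equiv.Perm α)) + Real.log sfg
        - Real.log sf - Real.log sg := by
      rw [hp, Real.log_div (by positivity) (by positivity), Real.log_mul hsf.ne' hsg.ne',
        Real.log_mul hsfg.ne' hG.ne']
      ring
    rw [← hlogK, ← hlogp, ← sub_eq_add_neg, ← Real.log_div (by positivity) hp0.ne']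
    rcases Nat.eq_zero_or_pos (C.image fun σ : Equiv.Perm α => g ∘ σ).card with h0 | h0
    · rw [h0, Nat.cast_zero, Real.log_zero]
      refine Real.log_nonneg ?_
      rw [le_div_iff₀ hp0]
      linarith
    · exact Real.log_le_log (by exact_mod_cast h0) hBC
  · intro τ
    obtain ⟨σ, hσ, ρ, h1, h2⟩ := hcov (f ∘ τ) (Finset.mem_image_of_mem _ (Finset.mem_univ τ))
    exact ⟨g ∘ σ, Finset.mem_image_of_mem _ hσ, ρ, h1, h2⟩

theorem exists_counts_of_weights {Y : Type*} [Fintype Y] [DecidableEq Y] (k : ℕ) (w : Y → ℝ)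
    (hw : ∀ y, 0 ≤ w y) (hw1 : ∑ y, w y = 1) (y₀ : Y) :
    ∃ N : Y → ℕ, ∑ y, N y = k ∧ (∀ y, y ≠ y₀ → (N y : ℝ) ≤ k * w y) ∧
      ∀ y, |(N y : ℝ) - k * w y| ≤ Fintype.card Y := by
  set fl : Y → ℕ := fun y => ⌊k * w y⌋₊
  have hnn : ∀ y, 0 ≤ k * w y := fun y => mul_nonneg k.cast_nonneg (hw y)
  have hfl : ∀ y, (fl y : ℝ) ≤ k * w y := fun y => Nat.floor_le (hnn y)
  have hfl' : ∀ y, k * w y - fl y ≤ 1 := fun y => by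
    linarith [Nat.lt_floor_add_one (k * w y)]
  have hw2 : w y₀ + ∑ y ∈ Finset.univ.erase y₀, w y = 1 := by
    rw [Finset.add_sum_erase _ _ (Finset.mem_univ _), hw1]
  have hsum : ∑ y ∈ Finset.univ.erase y₀, (fl y : ℝ) ≤ ∑ y ∈ Finset.univ.erase y₀, k * w y :=
    Finset.sum_le_sum fun y _ => hfl y
  have hkw : ∑ y ∈ Finset.univ.erase y₀, k * w y = k - k * w y₀ := by
    rw [← Finset.mul_sum]; linear_combination (k : ℝ) * hw2
  have hle : ∑ y ∈ Finset.univ.erase y₀, fl y ≤ k := by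
    have : ((∑ y ∈ Finset.univ.erase y₀, fl y : ℕ) : ℝ) ≤ k := by
      push_cast; linarith [hnn y₀]
    exact_mod_cast this
  have hcard : (1 : ℝ) ≤ Fintype.card Y := by
    exact_mod_cast Fintype.card_pos_iff.2 ⟨y₀⟩
  refine ⟨fun y => if y = y₀ then k - ∑ y ∈ Finset.univ.erase y₀, fl y else fl y, ?_, ?_, ?_⟩
  · rw [← Finset.add_sum_erase _ _ (Finset.mem_univ y₀), if_pos rfl]
    rw [Finset.sum_congr rfl fun y hy => if_neg (Finset.ne_of_mem_erase hy)]
    exact Nat.sub_add_cancel hle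
  · intro y hy
    simpa only [if_neg hy] using hfl y
  · intro y
    by_cases hy : y = y₀
    · subst hy
      simp only [if_pos]
      rw [Nat.cast_sub hle]
      push_cast
      have hdiff : ∑ z ∈ Finset.univ.erase y, (k * w z - fl z) ≤ Fintype.card Y := by
        calc _ ≤ ∑ z ∈ Finset.univ.erase y, (1 : ℝ) := Finset.sum_le_sum fun z _ => hfl' z
          _ ≤ ∑ z : Y, (1 : ℝ) :=
            Finset.sum_le_sum_of_subset_of_nonneg (Finset.erase_subset _ _) (by simp)
          _ = _ := by simp
      rw [Finset.sum_sub_distrib] at hdiff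
      rw [abs_le]
      constructor <;> linarith
    · simp only [if_neg hy]
      rw [abs_le]
      constructor <;> linarith [hfl y, hfl' y]

theorem sum_mul_log_eq {ι : Type*} [Fintype ι] (c : ι → ℕ) {n : ℕ} (hn : 0 < n)
    (hc : ∑ i, c i = n) :
    ∑ i, (c i : ℝ) * Real.log (c i)
      = n * Real.log n - n * ∑ i, Real.negMulLog ((c i : ℝ) / n) := by
  have hn' : (n : ℝ) ≠ 0 := by exact_mod_cast hn.ne'
  have hterm : ∀ i, (c i : ℝ) * Real.log (c i)
      = c i * Real.log n - n * Real.negMulLog ((c i : ℝ) / n) := by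
    intro i
    rcases eq_or_ne (c i : ℝ) 0 with h | h
    · simp [h]
    · rw [Real.negMulLog, Real.log_div h hn']
      field_simp
      ring
  rw [Finset.sum_congr rfl fun i _ => hterm i, Finset.sum_sub_distrib, ← Finset.sum_mul,
    ← Finset.mul_sum, ← Nat.cast_sum, hc]

theorem sum_log_factorial_ge {ι : Type*} [Fintype ι] (c : ι → ℕ) {n : ℕ} (hn : 0 < n)
    (hc : ∑ i, c i = n) :
    n * Real.log n - n - n * ∑ i, Real.negMulLog ((c i : ℝ) / n)
      ≤ ∑ i, Real.log (c i).factorial := by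
  have h := Finset.sum_le_sum fun i (_ : i ∈ Finset.univ) => log_factorial_ge (c i)
  rw [Finset.sum_sub_distrib, sum_mul_log_eq c hn hc, ← Nat.cast_sum, hc] at h
  linarith

theorem sum_log_factorial_le {ι : Type*} [Fintype ι] (c : ι → ℕ) {n : ℕ} (hn : 0 < n)
    (hc : ∑ i, c i = n) :
    ∑ i, Real.log (c i).factorial ≤ n * Real.log n - n
      - n * ∑ i, Real.negMulLog ((c i : ℝ) / n) + Fintype.card ι * (1 + Real.log (n + 1)) := by
  have hle : ∀ i, c i ≤ n := fun i => hc ▸ Finset.single_le_sum (fun _ _ => Nat.zero_le _)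
    (Finset.mem_univ i)
  have h : ∑ i, Real.log (c i).factorial
      ≤ ∑ i, ((c i : ℝ) * Real.log (c i) - c i + (1 + Real.log (n + 1))) := by
    refine Finset.sum_le_sum fun i _ => (log_factorial_le (c i)).trans ?_
    have : Real.log ((c i : ℝ) + 1) ≤ Real.log (n + 1) :=
      Real.log_le_log (by positivity) (by have := hle i; gcongr)
    linarith
  rw [Finset.sum_add_distrib, Finset.sum_sub_distrib, sum_mul_log_eq c hn hc, ← Nat.cast_sum, hc,
    Finset.sum_const, Finset.card_univ, nsmul_eq_mul] at h
  linarith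

theorem mutualInfo_eq_entropies {X Y : Type*} [Fintype X] [Fintype Y] {Q : X → ℝ}
    {W : X → Y → ℝ} (hQ : ∀ x, 0 ≤ Q x) (hW : ∀ x y, 0 ≤ W x y) (hW1 : ∀ x, ∑ y, W x y = 1) :
    mutualInfo Q W = ∑ x, Real.negMulLog (Q x) + ∑ y, Real.negMulLog (∑ x, Q x * W x y)
      - ∑ x, ∑ y, Real.negMulLog (Q x * W x y) := by
  have hterm : ∀ x y, Q x * W x y * Real.log (W x y / ∑ x', Q x' * W x' y)
      = W x y * Real.negMulLog (Q x) + Q x * W x y * -Real.log (∑ x', Q x' * W x' y)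
        - Real.negMulLog (Q x * W x y) := by
    intro x y
    rcases eq_or_ne (Q x) 0 with h | h
    · simp [h]
    rcases eq_or_ne (W x y) 0 with h' | h'
    · simp [h']
    have hpos : 0 < Q x * W x y :=
      mul_pos ((hQ x).lt_of_ne' h) ((hW x y).lt_of_ne' h')
    have hP : 0 < ∑ x', Q x' * W x' y :=
      hpos.trans_le (Finset.single_le_sum (f := fun x' => Q x' * W x' y)
        (fun x' _ => mul_nonneg (hQ x') (hW x' y)) (Finset.mem_univ x))
    rw [Real.log_div h' hP.ne', Real.negMulLog, Real.negMulLog, Real.log_mul h h']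
    ring
  simp only [mutualInfo, hterm, Finset.sum_add_distrib, Finset.sum_sub_distrib, ← Finset.sum_mul,
    hW1, one_mul]
  congr 2
  rw [Finset.sum_comm]
  refine Finset.sum_congr rfl fun y _ => ?_
  rw [← Finset.sum_mul, Real.negMulLog]
  ring

theorem exists_fun_card_fiber {ι : Type*} [Fintype ι] [DecidableEq ι] (N : ι → ℕ) {n : ℕ}
    (hN : ∑ q, N q = n) : ∃ f : Fin n → ι, ∀ q, Fintype.card {i // f i = q} = N q := by
  have e : Fin n ≃ Σ q, Fin (N q) := Fintype.equivOfCardEq (by simp [hN])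
  refine ⟨fun i => (e i).1, fun q => ?_⟩
  rw [Fintype.card_congr ((e.subtypeEquiv fun i => Iff.rfl).trans (Equiv.sigmaSubtype q) :
    {i // (e i).1 = q} ≃ Fin (N q)), Fintype.card_fin]

theorem exists_perm_comp_eq {α X : Type*} [Fintype α] [DecidableEq X] {f x : α → X}
    (h : ∀ a, Fintype.card {i // x i = a} = Fintype.card {i // f i = a}) :
    ∃ τ : Equiv.Perm α, f ∘ τ = x :=
  ⟨Equiv.ofFiberEquiv fun a => Fintype.equivOfCardEq (h a),
    funext fun i => Equiv.ofFiberEquiv_map _ i⟩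

theorem exists_jointType_cover {X Y : Type*} [Fintype X] [Fintype Y] [DecidableEq X]
    [DecidableEq Y] [Nonempty X] {n : ℕ} (hn : 0 < n) (N : X → Y → ℕ)
    (hN : ∑ a, ∑ b, N a b = n) (d : X → Y → ℝ) :
    ∃ B : Finset (Fin n → Y),
      Real.log B.card ≤ Real.log (n * Real.log (Fintype.card X) + 1)
        + (1 + Fintype.card X * Fintype.card Y) * (1 + Real.log (n + 1))
        + n * (∑ a, Real.negMulLog ((∑ b, N a b : ℕ) / n)
          + ∑ b, Real.negMulLog ((∑ a, N a b : ℕ) / n)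
          - ∑ a, ∑ b, Real.negMulLog ((N a b : ℝ) / n)) ∧
      ∀ x : Fin n → X, (∀ a, Fintype.card {i // x i = a} = ∑ b, N a b) →
        ∃ y ∈ B, ∑ i, d (x i) (y i) = ∑ a, ∑ b, N a b * d a b := by
  obtain ⟨F, hF⟩ := exists_fun_card_fiber (fun q : X × Y => N q.1 q.2)
    (by rw [Fintype.sum_prod_type, hN])
  have hfst : ∀ a, Fintype.card {i // (F i).1 = a} = ∑ b, N a b := by
    intro a
    rw [Fintype.card_subtype, Finset.card_eq_sum_card_fiberwise (f := fun i => (F i).2)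
      (t := Finset.univ) (fun _ _ => Finset.mem_coe.2 (Finset.mem_univ _))]
    refine Finset.sum_congr rfl fun b _ => ?_
    rw [Finset.filter_filter, ← hF (a, b), Fintype.card_subtype]
    simp only [Prod.ext_iff]
  have hsnd : ∀ b, Fintype.card {i // (F i).2 = b} = ∑ a, N a b := by
    intro b
    rw [Fintype.card_subtype, Finset.card_eq_sum_card_fiberwise (f := fun i => (F i).1)
      (t := Finset.univ) (fun _ _ => Finset.mem_coe.2 (Finset.mem_univ _))]
    refine Finset.sum_congr rfl fun a _ => ?_
    rw [Finset.filter_filter, ← hF (a, b), Fintype.card_subtype]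
    simp only [Prod.ext_iff, and_comm]
  obtain ⟨B, hB, hcov⟩ := exists_perm_orbit_cover (fun i => (F i).1) (fun i => (F i).2)
  refine ⟨B, ?_, ?_⟩
  · simp only [Prod.mk.eta, hF, hfst, hsnd, Fintype.card_fin] at hB
    have h1 := sum_log_factorial_ge (fun a => ∑ b, N a b) hn hN
    have h2 := sum_log_factorial_ge (fun b => ∑ a, N a b) hn (by rw [Finset.sum_comm, hN])
    have h3 := sum_log_factorial_le (fun q : X × Y => N q.1 q.2) hn
      (by rw [Fintype.sum_prod_type, hN])
    have h4 := log_factorial_le n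
    rw [Fintype.sum_prod_type (f := fun q : X × Y => Real.negMulLog _), Fintype.card_prod,
      Nat.cast_mul] at h3
    linarith
  · intro x hx
    obtain ⟨τ, hτ⟩ := exists_perm_comp_eq (f := fun i => (F i).1) (x := x) fun a => by
      rw [hx, hfst]
    obtain ⟨y, hy, ρ, h1, h2⟩ := hcov τ
    refine ⟨y, hy, ?_⟩
    rw [← hτ, ← h1, ← h2]
    simp only [Function.comp_apply]
    rw [Equiv.sum_comp ρ fun i => d (F i).1 (F i).2,
      ← Finset.sum_fiberwise' Finset.univ F fun q => d q.1 q.2]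
    simp only [Finset.sum_const, nsmul_eq_mul, ← Fintype.card_subtype, hF]
    rw [Fintype.sum_prod_type]

theorem exists_modulus_negMulLog {ε : ℝ} (hε : 0 < ε) :
    ∃ η > 0, ∀ s ∈ Set.Icc (0 : ℝ) 1, ∀ t ∈ Set.Icc (0 : ℝ) 1, |s - t| < η →
      |Real.negMulLog s - Real.negMulLog t| ≤ ε := by
  have h := isCompact_Icc.uniformContinuousOn_of_continuous
    (Real.continuous_negMulLog.continuousOn (s := Set.Icc (0 : ℝ) 1))
  obtain ⟨η, hη, H⟩ := Metric.uniformContinuousOn_iff.1 h ε hε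
  exact ⟨η, hη, fun s hs t ht hst => (H s hs t ht hst).le⟩

theorem eventually_add_mul_log_le (A C : ℝ) {c : ℝ} (hc : 0 < c) :
    ∀ᶠ n : ℕ in Filter.atTop, A + C * Real.log (n + 1) ≤ n * c := by
  have hlog : Filter.Tendsto (fun n : ℕ => Real.log ((n : ℝ) + 1) / ((n : ℝ) + 1))
      Filter.atTop (nhds 0) := by
    have h := Real.isLittleO_log_id_atTop.tendsto_div_nhds_zero
    exact h.comp (Filter.tendsto_atTop_add_const_right _ 1 tendsto_natCast_atTop_atTop)
  have hinv : Filter.Tendsto (fun n : ℕ => (A + c) * (1 / ((n : ℝ) + 1)))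
      Filter.atTop (nhds ((A + c) * 0)) :=
    tendsto_one_div_add_atTop_nhds_zero_nat.const_mul _
  have hsum := hinv.add (hlog.const_mul C)
  rw [mul_zero, mul_zero, add_zero] at hsum
  filter_upwards [hsum.eventually (gt_mem_nhds hc)] with n hn
  have hpos : (0 : ℝ) < n + 1 := by positivity
  have h2 : (A + c) * (1 / ((n : ℝ) + 1)) + C * (Real.log ((n : ℝ) + 1) / ((n : ℝ) + 1))
      = (A + c + C * Real.log (n + 1)) / (n + 1) := by ring
  rw [h2, div_lt_iff₀ hpos] at hn
  linarith

theorem entropies_counts_le {X Y : Type*} [Fintype X] [Fintype Y] {ε η : ℝ}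
    (hη : ∀ s ∈ Set.Icc (0 : ℝ) 1, ∀ t ∈ Set.Icc (0 : ℝ) 1, |s - t| < η →
      |Real.negMulLog s - Real.negMulLog t| ≤ ε)
    {n : ℕ} (hn : 0 < n) (hnη : (Fintype.card X * Fintype.card Y : ℝ) < η * n)
    {Q : X → ℝ} (hQ : IsProbDist Q) {W : X → Y → ℝ} (hW : ∀ x y, 0 ≤ W x y)
    (hW1 : ∀ x, ∑ y, W x y = 1) (N : X → Y → ℕ)
    (hNQ : ∀ a, ((∑ b, N a b : ℕ) : ℝ) = n * Q a)
    (hN : ∀ a b, |(N a b : ℝ) - n * Q a * W a b| ≤ Fintype.card Y) :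
    ∑ a, Real.negMulLog ((∑ b, N a b : ℕ) / n) + ∑ b, Real.negMulLog ((∑ a, N a b : ℕ) / n)
        - ∑ a, ∑ b, Real.negMulLog ((N a b : ℝ) / n)
      ≤ mutualInfo Q W + (Fintype.card Y + Fintype.card X * Fintype.card Y) * ε := by
  have hn' : (0 : ℝ) < n := by exact_mod_cast hn
  have hX : Nonempty X := by
    by_contra h
    rw [not_nonempty_iff] at h
    simpa using hQ.2
  have hX1 : (1 : ℝ) ≤ Fintype.card X := by exact_mod_cast Fintype.card_pos (α := X)
  have hNtot : ∑ a, ∑ b, (N a b : ℝ) = n := by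
    have h : ∀ a, ∑ b, (N a b : ℝ) = n * Q a := fun a => by rw [← hNQ]; push_cast; rfl
    rw [Finset.sum_congr rfl fun a _ => h a, ← Finset.mul_sum, hQ.2, mul_one]
  have hWtot : ∑ a, ∑ b, Q a * W a b = 1 := by
    simp only [← Finset.mul_sum, hW1, mul_one, hQ.2]
  have hQW : ∀ a b, 0 ≤ Q a * W a b := fun a b => mul_nonneg (hQ.1 a) (hW a b)
  have hcolN : ∀ b, ∑ a, (N a b : ℝ) ≤ n := fun b => by
    rw [← hNtot, Finset.sum_comm]
    exact Finset.single_le_sum (f := fun b => ∑ a, (N a b : ℝ))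
      (fun _ _ => by positivity) (Finset.mem_univ b)
  have hcolW : ∀ b, ∑ a, Q a * W a b ≤ 1 := fun b => by
    rw [← hWtot, Finset.sum_comm (f := fun a b => Q a * W a b)]
    exact Finset.single_le_sum (f := fun b => ∑ a, Q a * W a b)
      (fun b _ => Finset.sum_nonneg fun a _ => hQW a b) (Finset.mem_univ b)
  have hNle : ∀ a b, (N a b : ℝ) ≤ n := fun a b =>
    (Finset.single_le_sum (f := fun a => (N a b : ℝ)) (fun _ _ => by positivity)
      (Finset.mem_univ a)).trans (hcolN b)
  have hWle : ∀ a b, Q a * W a b ≤ 1 := fun a b =>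
    (Finset.single_le_sum (f := fun a => Q a * W a b) (fun a _ => hQW a b)
      (Finset.mem_univ a)).trans (hcolW b)
  have hdiv : ∀ s t c : ℝ, |s - n * t| ≤ c → c < η * n → |s / n - t| < η := by
    intro s t c h1 h2
    have : s / n - t = (s - n * t) / n := by field_simp
    rw [this, abs_div, abs_of_pos hn', div_lt_iff₀ hn']
    linarith
  have hjoint : ∀ a b, -ε ≤ Real.negMulLog ((N a b : ℝ) / n) - Real.negMulLog (Q a * W a b) := by
    intro a b
    refine (abs_le.1 (hη _ ⟨by positivity, (div_le_one hn').2 (hNle a b)⟩ _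
      ⟨hQW a b, hWle a b⟩ (hdiv _ _ (Fintype.card Y) ?_ ?_))).1
    · rw [← mul_assoc]; exact hN a b
    · nlinarith [(Fintype.card Y).cast_nonneg (α := ℝ)]
  have hmarg : ∀ b, Real.negMulLog ((∑ a, N a b : ℕ) / n)
      - Real.negMulLog (∑ a, Q a * W a b) ≤ ε := by
    intro b
    refine (abs_le.1 (hη _ ⟨by positivity, (div_le_one hn').2 ?_⟩ _
      ⟨Finset.sum_nonneg fun a _ => hQW a b, hcolW b⟩ (hdiv _ _ _ ?_ hnη))).2
    · push_cast; exact hcolN b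
    · push_cast
      rw [Finset.mul_sum, ← Finset.sum_sub_distrib]
      refine (Finset.abs_sum_le_sum_abs _ _).trans ?_
      calc _ ≤ ∑ a : X, (Fintype.card Y : ℝ) :=
            Finset.sum_le_sum fun a _ => by rw [← mul_assoc]; exact hN a b
        _ = _ := by simp
  have hsrc : ∀ a, Real.negMulLog ((∑ b, N a b : ℕ) / n) = Real.negMulLog (Q a) := fun a => by
    rw [hNQ, mul_div_cancel_left₀ _ hn'.ne']
  have hj := Finset.sum_le_sum fun a (_ : a ∈ Finset.univ) =>
    Finset.sum_le_sum fun b (_ : b ∈ Finset.univ) => hjoint a b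
  have hm := Finset.sum_le_sum fun b (_ : b ∈ Finset.univ) => hmarg b
  simp only [Finset.sum_sub_distrib, Finset.sum_const, Finset.card_univ, nsmul_eq_mul] at hj hm
  rw [mutualInfo_eq_entropies hQ.1 hW hW1, Finset.sum_congr rfl fun a _ => hsrc a]
  linarith

theorem exists_jointType_of_channel {X Y : Type*} [Fintype X] [Fintype Y] {d : X → Y → ℝ}
    (hd : ∀ x y, 0 ≤ d x y) (hzero : ∀ x, ∃ y, d x y = 0) (k : X → ℕ) {W : X → Y → ℝ}
    (hW : ∀ x y, 0 ≤ W x y) (hW1 : ∀ x, ∑ y, W x y = 1) :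
    ∃ N : X → Y → ℕ, (∀ a, ∑ b, N a b = k a) ∧
      (∑ a, ∑ b, N a b * d a b ≤ ∑ a, ∑ b, k a * W a b * d a b) ∧
      ∀ a b, |(N a b : ℝ) - k a * W a b| ≤ Fintype.card Y := by
  classical
  choose y₀ hy₀ using hzero
  choose N hN1 hN2 hN3 using fun a => exists_counts_of_weights (k a) (W a) (hW a) (hW1 a) (y₀ a)
  refine ⟨N, hN1, Finset.sum_le_sum fun a _ => Finset.sum_le_sum fun b _ => ?_, hN3⟩
  rcases eq_or_ne b (y₀ a) with rfl | hb
  · simp [hy₀]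
  · exact mul_le_mul_of_nonneg_right (hN2 a b hb) (hd a b)

theorem exists_channel_lt_rateDistortion_add {X Y : Type*} [Fintype X] [Fintype Y]
    {d : X → Y → ℝ} (hzero : ∀ x, ∃ y, d x y = 0) (Q : X → ℝ) {D : ℝ} (hD : 0 ≤ D) {ε : ℝ}
    (hε : 0 < ε) :
    ∃ W : X → Y → ℝ, (∀ x y, 0 ≤ W x y) ∧ (∀ x, ∑ y, W x y = 1) ∧
      (∑ x, ∑ y, Q x * W x y * d x y) ≤ D ∧ mutualInfo Q W < rateDistortion d D Q + ε := by
  classical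
  choose y₀ hy₀ using hzero
  obtain ⟨_, ⟨W, hW, hW1, hWD, rfl⟩, hlt⟩ := Real.lt_sInf_add_pos
    (s := {r | ∃ W : X → Y → ℝ, (∀ x y, 0 ≤ W x y) ∧ (∀ x, ∑ y, W x y = 1) ∧
      (∑ x, ∑ y, Q x * W x y * d x y) ≤ D ∧ r = mutualInfo Q W})
    ⟨_, fun x y => if y = y₀ x then 1 else 0, fun x y => by positivity, by simp,
      by simpa [hy₀] using hD, rfl⟩ hε
  exact ⟨W, hW, hW1, hWD, hlt⟩

theorem stmt9 {X Y : Type*} [Fintype X] [Fintype Y] [DecidableEq X]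
    [Nonempty X] [Nonempty Y]
    (d : X → Y → ℝ) (hd : ∀ x y, 0 ≤ d x y)
    (hzero : ∀ x, ∃ y, d x y = 0)
    (δ : ℝ) (hδ : 0 < δ) :
    ∃ n₀ : ℕ, ∀ n ≥ n₀, ∀ Q : X → ℝ, IsProbDist Q →
      (∀ a, ∃ k : ℕ, Q a = (k : ℝ) / n) →
      ∀ D : ℝ, 0 ≤ D →
      ∃ B : Finset (Fin n → Y),
        (1 / (n : ℝ)) * Real.log (B.card : ℝ) ≤ rateDistortion d D Q + δ ∧
        ∀ x : Fin n → X, (∀ a, empDist x a = Q a) →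
          ∃ y ∈ B, meanDist d x y ≤ D := by
  classical
  have hX : (1 : ℝ) ≤ Fintype.card X := by exact_mod_cast Fintype.card_pos (α := X)
  have hY : (1 : ℝ) ≤ Fintype.card Y := by exact_mod_cast Fintype.card_pos (α := Y)
  set cX : ℝ := ((Fintype.card X : ℕ) : ℝ)
  set cY : ℝ := ((Fintype.card Y : ℕ) : ℝ)
  have hlogX : 0 ≤ Real.log cX := Real.log_nonneg hX
  have hpos : 0 < cY + cX * cY := by positivity
  obtain ⟨η, hη0, hη⟩ := exists_modulus_negMulLog (ε := δ / 4 / (cY + cX * cY)) (by positivity)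
  have hev := (eventually_add_mul_log_le (Real.log (Real.log cX + 1) + (1 + cX * cY))
      (1 + (1 + cX * cY)) (c := δ / 4) (by positivity)).and
    ((Filter.eventually_gt_atTop 0).and
      ((tendsto_natCast_atTop_atTop.const_mul_atTop hη0).eventually_gt_atTop (cX * cY)))
  obtain ⟨n₀, hn₀⟩ := Filter.eventually_atTop.1 hev
  refine ⟨n₀, fun n hn Q hQ hQn D hD => ?_⟩
  obtain ⟨hasym, hn0, hnη⟩ := hn₀ n hn
  have hn' : (0 : ℝ) < n := by exact_mod_cast hn0
  choose k hk using hQn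
  have hkQ : ∀ a, (k a : ℝ) = n * Q a := fun a => by rw [hk a]; field_simp
  obtain ⟨W, hW, hW1, hWD, hWI⟩ := exists_channel_lt_rateDistortion_add hzero Q hD
    (half_pos hδ)
  obtain ⟨N, hN1, hND, hN3⟩ := exists_jointType_of_channel hd hzero k hW hW1
  have hNtot : ∑ a, ∑ b, N a b = n := by
    have h : ((∑ a, k a : ℕ) : ℝ) = n := by
      push_cast
      rw [Finset.sum_congr rfl fun a _ => hkQ a, ← Finset.mul_sum, hQ.2, mul_one]
    rw [Finset.sum_congr rfl fun a _ => hN1 a]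
    exact_mod_cast h
  obtain ⟨B, hB, hcov⟩ := exists_jointType_cover hn0 N hNtot d
  have hent := entropies_counts_le hη hn0 hnη hQ hW hW1 N (fun a => by rw [hN1, hkQ])
    (fun a b => by rw [← hkQ]; exact hN3 a b)
  rw [mul_div_cancel₀ _ hpos.ne'] at hent
  refine ⟨B, ?_, fun x hx => ?_⟩
  · have hlog : Real.log (n * Real.log cX + 1) ≤ Real.log (Real.log cX + 1) + Real.log (n + 1) := by
      rw [← Real.log_mul (by positivity) (by positivity)]
      exact Real.log_le_log (by positivity) (by nlinarith)
    have hmul := mul_le_mul_of_nonneg_left (hent.trans (add_le_add_left hWI.le _)) hn'.le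
    rw [one_div, inv_mul_le_iff₀ hn']
    nlinarith
  · obtain ⟨y, hy, hsum⟩ := hcov x fun a => by
      have h := hx a
      rw [empDist, hk a, div_left_inj' hn'.ne'] at h
      rw [hN1, Fintype.card_subtype]
      exact_mod_cast h
    refine ⟨y, hy, ?_⟩
    have hdist : ∑ a, ∑ b, (k a : ℝ) * W a b * d a b ≤ n * D := by
      simp only [hkQ, mul_assoc, ← Finset.mul_sum]
      refine mul_le_mul_of_nonneg_left ?_ hn'.le
      simpa only [mul_assoc, ← Finset.mul_sum] using hWD
    rw [meanDist, hsum, one_div, inv_mul_le_iff₀ hn']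
    exact hND.trans hdist
end

section
/- (Deception exponent) For finite alphabets X, Y, a distortion measure d with ∀x ∃y d(x,y)=0, distortion level D ≥ 0, and a full-support source distribution P on X, the deception exponent E(D) = liminf_{n→∞} (1/n) min_{S^(n)} log E_P[G^(n)(X^n)] satisfies E(D) = max_Q [R(D,Q) − D(Q‖P)], where R(D,Q) is the rate-distortion function of Q and D(Q‖P) the relative entropy, maximized over distributions Q on X. -/
open scoped BigOperators

section LogSums

/-- Jensen's inequality for the logarithm; values of weight zero may be arbitrary. -/
lemma sum_mul_log_le_log_of_sum_le {ι : Type*} (s : Finset ι) (w t : ι → ℝ) {c : ℝ}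
    (hw : ∀ i ∈ s, 0 ≤ w i) (hsum : ∑ i ∈ s, w i = 1) (ht : ∀ i ∈ s, w i ≠ 0 → 0 < t i)
    (hc : 0 < c) (hle : ∑ i ∈ s, w i * t i ≤ c) :
    ∑ i ∈ s, w i * Real.log (t i) ≤ Real.log c := by
  have hterm : ∀ i ∈ s, w i * Real.log (t i) ≤ w i * t i / c - w i + w i * Real.log c := by
    intro i hi
    by_cases h0 : w i = 0
    · simp [h0]
    have htp := ht i hi h0
    have h1 := Real.log_le_sub_one_of_pos (div_pos htp hc)
    rw [Real.log_div htp.ne' hc.ne'] at h1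
    have h2 := mul_le_mul_of_nonneg_left h1 (hw i hi)
    have h3 : w i * t i / c = w i * (t i / c) := by ring
    rw [h3]
    linarith
  calc ∑ i ∈ s, w i * Real.log (t i)
      ≤ ∑ i ∈ s, (w i * t i / c - w i + w i * Real.log c) := Finset.sum_le_sum hterm
    _ = (∑ i ∈ s, w i * t i) / c - 1 + Real.log c := by
      rw [Finset.sum_add_distrib, Finset.sum_sub_distrib, hsum, ← Finset.sum_div,
        ← Finset.sum_mul, hsum, one_mul]
    _ ≤ Real.log c := by
      have := (div_le_one hc).2 hle
      linarith

/-- The reciprocals of `m` distinct positive integers sum to at most `2 + log m`. -/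
lemma sum_inv_le_two_add_log_card (s : Finset ℕ) (hs : ∀ j ∈ s, 1 ≤ j) (hne : s.Nonempty) :
    ∑ j ∈ s, ((j : ℝ))⁻¹ ≤ 2 + Real.log s.card := by
  have hm : (0 : ℝ) < s.card := by exact_mod_cast hne.card_pos
  have hterm : ∀ j ∈ s, ((j : ℝ))⁻¹ ≤
      (if j ∈ Finset.Icc 1 s.card then ((j : ℝ))⁻¹ else 0) + ((s.card : ℝ))⁻¹ := by
    intro j hj
    have hj1 := hs j hj
    split_ifs with h
    · have : 0 < ((s.card : ℝ))⁻¹ := inv_pos.2 hm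
      linarith
    · rw [zero_add]
      apply inv_anti₀ hm
      rw [Finset.mem_Icc] at h
      exact_mod_cast (by omega : s.card ≤ j)
  have hharm : ∑ j ∈ Finset.Icc 1 s.card, ((j : ℝ))⁻¹ ≤ 1 + Real.log s.card := by
    have := harmonic_le_one_add_log s.card
    rw [harmonic_eq_sum_Icc] at this
    push_cast at this
    exact this
  calc ∑ j ∈ s, ((j : ℝ))⁻¹
      ≤ ∑ j ∈ s, ((if j ∈ Finset.Icc 1 s.card then ((j : ℝ))⁻¹ else 0) + ((s.card : ℝ))⁻¹) :=
        Finset.sum_le_sum hterm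
    _ = ∑ j ∈ s with j ∈ Finset.Icc 1 s.card, ((j : ℝ))⁻¹ + 1 := by
      rw [Finset.sum_add_distrib, Finset.sum_filter, Finset.sum_const, nsmul_eq_mul,
        mul_inv_cancel₀ hm.ne']
    _ ≤ ∑ j ∈ Finset.Icc 1 s.card, ((j : ℝ))⁻¹ + 1 := by
      gcongr
      intro j hj
      exact (Finset.mem_filter.1 hj).2
    _ ≤ 2 + Real.log s.card := by linarith

lemma mul_log_sub_le_log_factorial (n : ℕ) :
    (n : ℝ) * Real.log n - n ≤ Real.log n.factorial := by
  rcases Nat.eq_zero_or_pos n with rfl | hn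
  · simp
  have hn' : (0 : ℝ) < n := by exact_mod_cast hn
  have hf : (0 : ℝ) < n.factorial := by exact_mod_cast n.factorial_pos
  have h := Real.pow_div_factorial_le_exp (n : ℝ) hn'.le n
  have h2 := Real.log_le_log (by positivity) h
  rw [Real.log_div (by positivity) hf.ne', Real.log_pow, Real.log_exp] at h2
  linarith

lemma log_factorial_le_mul_log (n : ℕ) :
    Real.log n.factorial ≤ (n : ℝ) * Real.log n - n + 1 + Real.log n := by
  induction n with
  | zero => simp
  | succ k ih =>
    rcases Nat.eq_zero_or_pos k with rfl | hk
    · simp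
    have hk' : (0 : ℝ) < k := by exact_mod_cast hk
    have hf : (0 : ℝ) < k.factorial := by exact_mod_cast k.factorial_pos
    have hlog : Real.log k + 1 / (k + 1) ≤ Real.log ((k : ℝ) + 1) := by
      have h := Real.log_le_sub_one_of_pos (show (0 : ℝ) < k / (k + 1) by positivity)
      rw [Real.log_div hk'.ne' (by positivity)] at h
      have : (k : ℝ) / (k + 1) - 1 = -(1 / (k + 1)) := by field_simp; ring
      linarith
    have hmul := mul_le_mul_of_nonneg_left hlog (show (0 : ℝ) ≤ k + 1 by positivity)
    have hone : ((k : ℝ) + 1) * (Real.log k + 1 / (k + 1)) = (k + 1) * Real.log k + 1 := by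
      field_simp
    rw [Nat.factorial_succ]
    push_cast
    rw [Real.log_mul (by positivity) hf.ne']
    linarith

end LogSums

section Products

lemma prodDist_nonneg {X : Type*} {Q : X → ℝ} (hQ : ∀ a, 0 ≤ Q a) {n : ℕ} (x : Fin n → X) :
    0 ≤ prodDist Q x := Finset.prod_nonneg fun _ _ => hQ _

lemma prodDist_pos {X : Type*} {Q : X → ℝ} (hQ : ∀ a, 0 < Q a) {n : ℕ} (x : Fin n → X) :
    0 < prodDist Q x := Finset.prod_pos fun _ _ => hQ _

variable {X : Type*} [Fintype X]

lemma sum_prod_eq_prod_sum {n : ℕ} (g : Fin n → X → ℝ) :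
    ∑ x : Fin n → X, ∏ i, g i (x i) = ∏ i, ∑ a, g i a := by
  classical
  rw [Finset.prod_univ_sum, Fintype.piFinset_univ]

lemma sum_prodDist_eq_one {Q : X → ℝ} (hQ : ∑ a, Q a = 1) (n : ℕ) :
    ∑ x : Fin n → X, prodDist Q x = 1 := by
  simp [prodDist, sum_prod_eq_prod_sum (fun _ : Fin n => Q), hQ]

/-- The `k`-th coordinate of an i.i.d. sequence has law `Q`. -/
lemma sum_prodDist_mul_coord {Q : X → ℝ} (hQ : ∑ a, Q a = 1) {n : ℕ} (k : Fin n)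
    (h : X → ℝ) : ∑ x : Fin n → X, prodDist Q x * h (x k) = ∑ a, Q a * h a := by
  classical
  have h1 : ∀ x : Fin n → X, prodDist Q x * h (x k)
      = ∏ i, (Q (x i) * if i = k then h (x i) else 1) := by
    intro x
    rw [Finset.prod_mul_distrib, Finset.prod_ite_eq' Finset.univ k (fun i => h (x i))]
    simp [prodDist]
  rw [Finset.sum_congr rfl fun x _ => h1 x,
    sum_prod_eq_prod_sum (fun i a => Q a * if i = k then h a else 1),
    Finset.prod_eq_single k]
  · simp
  · intro i _ hi
    simp [hi, hQ]
  · simp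

end Products

section MutualInformation

variable {X Y : Type*} [Fintype X] [Fintype Y]

lemma mutualInfo_nonneg {Q : X → ℝ} (hQ : IsProbDist Q) {W : X → Y → ℝ}
    (hW : ∀ x y, 0 ≤ W x y) (hW1 : ∀ x, ∑ y, W x y = 1) : 0 ≤ mutualInfo Q W := by
  set q : Y → ℝ := fun y => ∑ x', Q x' * W x' y with hq
  have hq0 : ∀ y, 0 ≤ q y := fun y =>
    Finset.sum_nonneg fun x _ => mul_nonneg (hQ.1 x) (hW x y)
  have hq1 : ∑ y, q y = 1 := by
    rw [hq, Finset.sum_comm]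
    simp [← Finset.mul_sum, hW1, hQ.2]
  have hpos : ∀ p : X × Y, Q p.1 * W p.1 p.2 ≠ 0 → 0 < W p.1 p.2 ∧ 0 < q p.2 := by
    intro p hp
    have hQp := (hQ.1 p.1).lt_of_ne' (left_ne_zero_of_mul hp)
    have hWp := (hW p.1 p.2).lt_of_ne' (right_ne_zero_of_mul hp)
    refine ⟨hWp, lt_of_lt_of_le (mul_pos hQp hWp) ?_⟩
    exact Finset.single_le_sum (f := fun x' => Q x' * W x' p.2)
      (fun x _ => mul_nonneg (hQ.1 x) (hW x p.2)) (Finset.mem_univ p.1)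
  have key := sum_mul_log_le_log_of_sum_le (Finset.univ : Finset (X × Y))
    (fun p => Q p.1 * W p.1 p.2) (fun p => q p.2 / W p.1 p.2) (c := 1)
    (fun p _ => mul_nonneg (hQ.1 _) (hW _ _))
    (by rw [Fintype.sum_prod_type]; simp [← Finset.mul_sum, hW1, hQ.2])
    (fun p _ hp => div_pos (hpos p hp).2 (hpos p hp).1) one_pos (by
      calc ∑ p : X × Y, Q p.1 * W p.1 p.2 * (q p.2 / W p.1 p.2)
          ≤ ∑ p : X × Y, Q p.1 * q p.2 := by
            refine Finset.sum_le_sum fun p _ => ?_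
            rcases eq_or_ne (W p.1 p.2) 0 with h | h
            · simpa [h] using mul_nonneg (hQ.1 p.1) (hq0 p.2)
            · apply le_of_eq
              field_simp
        _ = 1 := by
            rw [Fintype.sum_prod_type]
            simp [← Finset.mul_sum, hq1, hQ.2])
  have hneg : ∑ p : X × Y, Q p.1 * W p.1 p.2 * Real.log (q p.2 / W p.1 p.2)
      = - mutualInfo Q W := by
    rw [mutualInfo, Fintype.sum_prod_type, ← Finset.sum_neg_distrib]
    refine Finset.sum_congr rfl fun x _ => ?_
    rw [← Finset.sum_neg_distrib]
    refine Finset.sum_congr rfl fun y _ => ?_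
    rw [← inv_div, Real.log_inv, mul_neg]
  rw [hneg, Real.log_one] at key
  linarith

lemma rateDistortion_le_mutualInfo {d : X → Y → ℝ} {D : ℝ} {Q : X → ℝ} (hQ : IsProbDist Q)
    {W : X → Y → ℝ} (hW : ∀ x y, 0 ≤ W x y) (hW1 : ∀ x, ∑ y, W x y = 1)
    (hWd : ∑ x, ∑ y, Q x * W x y * d x y ≤ D) :
    rateDistortion d D Q ≤ mutualInfo Q W := by
  apply csInf_le
  · refine ⟨0, ?_⟩
    rintro r ⟨V, hV, hV1, -, rfl⟩
    exact mutualInfo_nonneg hQ hV hV1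
  · exact ⟨W, hW, hW1, hWd, rfl⟩

/-- Some admissible channel comes within `ε` of the rate-distortion function. -/
lemma exists_mutualInfo_lt_rateDistortion_add {d : X → Y → ℝ} (hzero : ∀ x, ∃ y, d x y = 0)
    {D : ℝ} (hD : 0 ≤ D) (Q : X → ℝ) {ε : ℝ} (hε : 0 < ε) :
    ∃ W : X → Y → ℝ, (∀ x y, 0 ≤ W x y) ∧ (∀ x, ∑ y, W x y = 1) ∧
      (∑ x, ∑ y, Q x * W x y * d x y) ≤ D ∧ mutualInfo Q W < rateDistortion d D Q + ε := by
  classical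
  choose g hg using hzero
  have hne : {r | ∃ W : X → Y → ℝ, (∀ x y, 0 ≤ W x y) ∧ (∀ x, ∑ y, W x y = 1) ∧
      (∑ x, ∑ y, Q x * W x y * d x y) ≤ D ∧ r = mutualInfo Q W}.Nonempty := by
    refine ⟨_, fun x y => if y = g x then 1 else 0, ?_, ?_, ?_, rfl⟩
    · intro x y
      dsimp only
      split_ifs <;> simp
    · simp
    · simp [hg, hD]
  obtain ⟨r, ⟨W, h1, h2, h3, rfl⟩, hlt⟩ :=
    exists_lt_of_csInf_lt hne (lt_add_of_pos_right (rateDistortion d D Q) hε)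
  exact ⟨W, h1, h2, h3, hlt⟩

end MutualInformation

section Converse

variable {X Y : Type*} [Fintype X] [Fintype Y]

/-- The guess at position `countG` is the first one within distortion `D`. -/
lemma meanDist_getElem_countG_le {X Y : Type*} {d : X → Y → ℝ} {D : ℝ} {n : ℕ}
    {S : List (Fin n → Y)} {x : Fin n → X} (h : ∃ y ∈ S, meanDist d x y ≤ D) :
    1 ≤ countG d D S x ∧
      ∃ hlt : countG d D S x - 1 < S.length, meanDist d x S[countG d D S x - 1] ≤ D := by
  have hne : {j : ℕ | ∃ y ∈ S.take j, meanDist d x y ≤ D}.Nonempty := by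
    refine ⟨S.length, ?_⟩
    simpa using h
  obtain ⟨y, hy, hyD⟩ := Nat.sInf_mem hne
  change y ∈ S.take (countG d D S x) at hy
  obtain ⟨i, hi, rfl⟩ := List.mem_iff_getElem.1 hy
  have hi' : i < countG d D S x ∧ i < S.length := by simpa using hi
  have hmin : countG d D S x ≤ i + 1 := by
    refine Nat.sInf_le ⟨_, ?_, hyD⟩
    rw [List.mem_iff_getElem]
    exact ⟨i, by simpa using hi'.2, by simp⟩
  have hieq : i = countG d D S x - 1 := by omega
  refine ⟨by omega, by omega, ?_⟩
  simpa [← hieq] using hyD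

/-- Time-averaged joint law of a random input sequence and a sequence depending on it. -/
noncomputable def averageJoint [DecidableEq X] [DecidableEq Y] {n : ℕ}
    (w : (Fin n → X) → ℝ) (f : (Fin n → X) → (Fin n → Y)) (a : X) (b : Y) : ℝ :=
  (1 / (n : ℝ)) * ∑ x, w x * ∑ i, if x i = a ∧ f x i = b then 1 else 0

lemma sum_averageJoint_mul [DecidableEq X] [DecidableEq Y] {n : ℕ}
    (w : (Fin n → X) → ℝ) (f : (Fin n → X) → (Fin n → Y)) (g : X → Y → ℝ) :
    ∑ a, ∑ b, averageJoint w f a b * g a b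
      = (1 / (n : ℝ)) * ∑ x, w x * ∑ i, g (x i) (f x i) := by
  have h : ∀ x : Fin n → X, ∀ i, g (x i) (f x i)
      = ∑ a, ∑ b, (if x i = a ∧ f x i = b then (1 : ℝ) else 0) * g a b := by
    intro x i
    rw [Finset.sum_eq_single (x i), Finset.sum_eq_single (f x i)]
    · simp
    · intro b _ hb
      simp [hb.symm]
    · simp
    · intro a _ ha
      simp [ha.symm]
    · simp
  simp_rw [h, averageJoint, mul_assoc, Finset.sum_mul, ← Finset.mul_sum]
  congr 1
  simp_rw [mul_assoc, Finset.sum_mul]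
  have hx : ∀ x : Fin n → X, ∑ i, ∑ a, ∑ b, (if x i = a ∧ f x i = b then (1 : ℝ) else 0) * g a b
      = ∑ a, ∑ b, ∑ i, (if x i = a ∧ f x i = b then (1 : ℝ) else 0) * g a b := by
    intro x
    rw [Finset.sum_comm]
    refine Finset.sum_congr rfl fun a _ => ?_
    rw [Finset.sum_comm]
  simp_rw [hx, Finset.mul_sum]
  calc _ = ∑ a, ∑ x : Fin n → X, ∑ b, ∑ i,
        w x * ((if x i = a ∧ f x i = b then (1 : ℝ) else 0) * g a b) :=
        Finset.sum_congr rfl fun a _ => Finset.sum_comm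
    _ = _ := Finset.sum_comm

lemma averageJoint_nonneg {X Y : Type*} [Fintype X] [DecidableEq X] [DecidableEq Y] {n : ℕ}
    {w : (Fin n → X) → ℝ} (hw : ∀ x, 0 ≤ w x) (f : (Fin n → X) → (Fin n → Y)) (a : X) (b : Y) :
    0 ≤ averageJoint w f a b := by
  unfold averageJoint
  refine mul_nonneg (by positivity) (Finset.sum_nonneg fun x _ => mul_nonneg (hw x) ?_)
  exact Finset.sum_nonneg fun i _ => by split_ifs <;> simp

lemma averageJoint_pos {X Y : Type*} [Fintype X] [DecidableEq X] [DecidableEq Y] {n : ℕ}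
    {w : (Fin n → X) → ℝ} (hw : ∀ x, 0 ≤ w x) (f : (Fin n → X) → (Fin n → Y))
    {x : Fin n → X} (hx : 0 < w x) (i : Fin n) :
    0 < averageJoint w f (x i) (f x i) := by
  have hn : 0 < n := i.pos
  unfold averageJoint
  refine mul_pos (by positivity) (Finset.sum_pos' (fun z _ => mul_nonneg (hw z) ?_)
    ⟨x, Finset.mem_univ x, mul_pos hx ?_⟩)
  · exact Finset.sum_nonneg fun i _ => by split_ifs <;> simp
  · exact Finset.sum_pos' (fun j _ => by split_ifs <;> simp) ⟨i, Finset.mem_univ i, by simp⟩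

lemma sum_averageJoint_prodDist [DecidableEq X] [DecidableEq Y] {Q : X → ℝ}
    (hQ : ∑ a, Q a = 1) {n : ℕ} (hn : n ≠ 0) (f : (Fin n → X) → (Fin n → Y)) (a : X) :
    ∑ b, averageJoint (prodDist Q) f a b = Q a := by
  have h := sum_averageJoint_mul (prodDist Q) f (fun c _ => if c = a then (1 : ℝ) else 0)
  have hl : ∑ c, ∑ b, averageJoint (prodDist Q) f c b * (if c = a then (1 : ℝ) else 0)
      = ∑ b, averageJoint (prodDist Q) f a b := by
    rw [Finset.sum_eq_single a]
    · simp
    · intro c _ hc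
      simp [hc]
    · simp
  rw [← hl, h]
  simp_rw [Finset.mul_sum]
  rw [Finset.sum_comm]
  simp_rw [← Finset.mul_sum,
    sum_prodDist_mul_coord hQ _ (fun c => if c = a then (1 : ℝ) else 0)]
  have : (n : ℝ) ≠ 0 := by exact_mod_cast hn
  simp [this]

/-- Single-letter converse: guessing an i.i.d. `Q` sequence costs at least `R(D, Q)` nats
per letter in expected log-index, up to a logarithmic term. -/
lemma rateDistortion_le_sum_prodDist_mul_log [Nonempty X] [Nonempty Y] {d : X → Y → ℝ} {D : ℝ}
    {Q : X → ℝ} (hQ : IsProbDist Q) {n : ℕ} (hn : n ≠ 0) (G : (Fin n → X) → ℕ)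
    (hG : ∀ x, 1 ≤ G x) (s : ℕ → (Fin n → Y)) (hs : ∀ x, meanDist d x (s (G x)) ≤ D) :
    n * rateDistortion d D Q - Real.log (2 + n * Real.log (Fintype.card X))
      ≤ ∑ x : Fin n → X, prodDist Q x * Real.log (G x) := by
  classical
  set w : (Fin n → X) → ℝ := prodDist Q with hw
  have hw0 : ∀ x, 0 ≤ w x := prodDist_nonneg hQ.1
  have hw1 : ∑ x, w x = 1 := sum_prodDist_eq_one hQ.2 n
  have hn' : (0 : ℝ) < n := by positivity
  set f : (Fin n → X) → (Fin n → Y) := fun x => s (G x) with hf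
  set u := averageJoint w f with hu
  have hu0 : ∀ a b, 0 ≤ u a b := averageJoint_nonneg hw0 f
  have huQ : ∀ a, ∑ b, u a b = Q a := sum_averageJoint_prodDist hQ.2 hn f
  set W : X → Y → ℝ := fun a b => if Q a = 0 then 1 / (Fintype.card Y : ℝ) else u a b / Q a
    with hWdef
  have hQW : ∀ a b, Q a * W a b = u a b := by
    intro a b
    by_cases h : Q a = 0
    · have := (Finset.sum_eq_zero_iff_of_nonneg fun b _ => hu0 a b).1 ((huQ a).trans h) b
        (Finset.mem_univ b)
      simp [h, this]
    · simp only [hWdef, h, if_false]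
      field_simp
  have hW0 : ∀ a b, 0 ≤ W a b := by
    intro a b
    simp only [hWdef]
    split_ifs
    · positivity
    · exact div_nonneg (hu0 a b) (hQ.1 a)
  have hW1 : ∀ a, ∑ b, W a b = 1 := by
    intro a
    by_cases h : Q a = 0
    · simp [hWdef, h]
    · simp only [hWdef, h, if_false]
      rw [← Finset.sum_div, huQ, div_self h]
  set q : Y → ℝ := fun b => ∑ a, Q a * W a b with hq
  have hqu : ∀ b, q b = ∑ a, u a b := fun b => Finset.sum_congr rfl fun a _ => hQW a b
  have hq0 : ∀ b, 0 ≤ q b := fun b => by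
    rw [hqu]
    exact Finset.sum_nonneg fun a _ => hu0 a b
  have hdist : ∑ a, ∑ b, Q a * W a b * d a b ≤ D := by
    simp_rw [hQW]
    rw [sum_averageJoint_mul w f d, Finset.mul_sum]
    calc ∑ x, (1 / (n : ℝ)) * (w x * ∑ i, d (x i) (f x i))
        ≤ ∑ x, w x * D := by
          refine Finset.sum_le_sum fun x _ => ?_
          have := mul_le_mul_of_nonneg_left (hs x) (hw0 x)
          unfold meanDist at this
          calc _ = w x * (1 / (n : ℝ) * ∑ i, d (x i) (s (G x) i)) := by
                simp only [hf]; ring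
            _ ≤ _ := this
      _ = D := by rw [← Finset.sum_mul, hw1, one_mul]
  have hI := rateDistortion_le_mutualInfo hQ hW0 hW1 hdist
  set α : X → Y → ℝ := fun a b => W a b / q b with hα
  have hα0 : ∀ a b, 0 ≤ α a b := fun a b => div_nonneg (hW0 a b) (hq0 b)
  have hαpos : ∀ x, w x ≠ 0 → ∀ i, 0 < α (x i) (f x i) := by
    intro x hx i
    have hup := averageJoint_pos hw0 f ((hw0 x).lt_of_ne' hx) i
    apply div_pos
    · refine (hW0 _ _).lt_of_ne' fun h => ?_
      have := hQW (x i) (f x i)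
      rw [h, mul_zero] at this
      exact hup.ne this
    · rw [hqu]
      exact lt_of_lt_of_le hup (Finset.single_le_sum (f := fun a => u a (f x i))
        (fun a _ => hu0 a _) (Finset.mem_univ (x i)))
  have hInfo : n * mutualInfo Q W = ∑ x, w x * Real.log (∏ i, α (x i) (f x i)) := by
    have h1 : mutualInfo Q W = ∑ a, ∑ b, u a b * Real.log (α a b) := by
      unfold mutualInfo
      simp_rw [hQW, hα, hqu]
    rw [h1, sum_averageJoint_mul w f (fun a b => Real.log (α a b)), ← mul_assoc,
      mul_one_div_cancel hn'.ne', one_mul]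
    refine Finset.sum_congr rfl fun x _ => ?_
    by_cases hx : w x = 0
    · simp [hx]
    · rw [Real.log_prod fun i _ => (hαpos x hx i).ne']
  have hball : ∀ y : Fin n → Y, ∑ x, w x * ∏ i, α (x i) (y i) ≤ 1 := by
    intro y
    simp_rw [hw, prodDist, ← Finset.prod_mul_distrib]
    rw [sum_prod_eq_prod_sum (fun i a => Q a * α a (y i))]
    refine Finset.prod_le_one (fun i _ => Finset.sum_nonneg fun a _ =>
      mul_nonneg (hQ.1 a) (hα0 a _)) fun i _ => ?_
    have : ∑ a, Q a * α a (y i) = q (y i) / q (y i) := by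
      simp_rw [hα, hq, ← mul_div_assoc]
      rw [← Finset.sum_div]
    rw [this]
    exact div_self_le_one _
  have hinv : ∑ j ∈ Finset.univ.image G, ((j : ℝ))⁻¹ ≤ 2 + n * Real.log (Fintype.card X) := by
    have hne : (Finset.univ.image G).Nonempty := Finset.univ_nonempty.image G
    refine (sum_inv_le_two_add_log_card _ ?_ hne).trans ?_
    · intro j hj
      obtain ⟨x, -, rfl⟩ := Finset.mem_image.1 hj
      exact hG x
    · have hcard : (Finset.univ.image G).card ≤ Fintype.card X ^ n := by
        refine Finset.card_image_le.trans ?_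
        simp
      have h := Real.log_le_log (by exact_mod_cast hne.card_pos)
        (show ((Finset.univ.image G).card : ℝ) ≤ (Fintype.card X : ℝ) ^ n by exact_mod_cast hcard)
      rw [Real.log_pow] at h
      linarith
  have hsum : ∑ x, w x * ((∏ i, α (x i) (f x i)) / G x)
      ≤ 2 + n * Real.log (Fintype.card X) := by
    refine le_trans ?_ hinv
    rw [← Finset.sum_fiberwise_of_maps_to
      (fun x _ => Finset.mem_image_of_mem G (Finset.mem_univ x))]
    refine Finset.sum_le_sum fun j _ => ?_
    calc ∑ x with G x = j, w x * ((∏ i, α (x i) (f x i)) / G x)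
        = ∑ x with G x = j, (w x * ∏ i, α (x i) (s j i)) * ((j : ℝ))⁻¹ := by
          refine Finset.sum_congr rfl fun x hx => ?_
          rw [Finset.mem_filter] at hx
          simp only [hf, hx.2, div_eq_mul_inv, mul_assoc]
      _ ≤ ∑ x, (w x * ∏ i, α (x i) (s j i)) * ((j : ℝ))⁻¹ := by
          refine Finset.sum_le_sum_of_subset_of_nonneg (Finset.filter_subset _ _) fun x _ _ => ?_
          exact mul_nonneg (mul_nonneg (hw0 x) (Finset.prod_nonneg fun i _ => hα0 _ _))
            (by positivity)
      _ ≤ ((j : ℝ))⁻¹ := by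
          rw [← Finset.sum_mul]
          exact mul_le_of_le_one_left (by positivity) (hball (s j))
  have hlogX : 0 ≤ Real.log (Fintype.card X) := Real.log_natCast_nonneg _
  have hjen := sum_mul_log_le_log_of_sum_le Finset.univ w
    (fun x => (∏ i, α (x i) (f x i)) / G x) (fun x _ => hw0 x) hw1
    (fun x _ hx => div_pos (Finset.prod_pos fun i _ => hαpos x hx i)
      (by exact_mod_cast hG x)) (by positivity) hsum
  have hsplit : ∑ x, w x * Real.log ((∏ i, α (x i) (f x i)) / G x)
      = n * mutualInfo Q W - ∑ x, w x * Real.log (G x) := by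
    rw [hInfo, ← Finset.sum_sub_distrib]
    refine Finset.sum_congr rfl fun x _ => ?_
    by_cases hx : w x = 0
    · simp [hx]
    · rw [Real.log_div (Finset.prod_pos fun i _ => hαpos x hx i).ne'
        (by exact_mod_cast (Nat.one_le_iff_ne_zero.1 (hG x))), mul_sub]
  rw [hsplit] at hjen
  have := mul_le_mul_of_nonneg_left hI hn'.le
  linarith

/-- Change of measure from `P` to `Q` for an i.i.d. sequence. -/
lemma sum_prodDist_mul_log_sub_klDiv_le {P Q : X → ℝ} (hfull : ∀ a, 0 < P a)
    (hQ : IsProbDist Q) [Nonempty X] {n : ℕ} (G : (Fin n → X) → ℕ) (hG : ∀ x, 1 ≤ G x) :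
    ∑ x : Fin n → X, prodDist Q x * Real.log (G x) - n * klDiv Q P
      ≤ Real.log (∑ x : Fin n → X, prodDist P x * (G x : ℝ)) := by
  have hP : ∀ x : Fin n → X, 0 < prodDist P x := prodDist_pos hfull
  have hw0 : ∀ x : Fin n → X, 0 ≤ prodDist Q x := prodDist_nonneg hQ.1
  have hGpos : ∀ x, (0 : ℝ) < G x := fun x => by exact_mod_cast hG x
  have hjen := sum_mul_log_le_log_of_sum_le Finset.univ (prodDist Q : (Fin n → X) → ℝ)
    (fun x => prodDist P x * G x / prodDist Q x) (fun x _ => hw0 x) (sum_prodDist_eq_one hQ.2 n)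
    (fun x _ hx => div_pos (mul_pos (hP x) (hGpos x)) ((hw0 x).lt_of_ne' hx))
    (c := ∑ x : Fin n → X, prodDist P x * (G x : ℝ))
    (Finset.sum_pos (fun x _ => mul_pos (hP x) (hGpos x)) Finset.univ_nonempty)
    (Finset.sum_le_sum fun x _ => by
      by_cases hx : prodDist Q x = 0
      · simpa [hx] using (mul_pos (hP x) (hGpos x)).le
      · apply le_of_eq
        field_simp)
  refine le_trans (le_of_eq ?_) hjen
  have hkl : n * klDiv Q P
      = ∑ x : Fin n → X, prodDist Q x * ∑ i, Real.log (Q (x i) / P (x i)) := by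
    simp_rw [Finset.mul_sum]
    rw [Finset.sum_comm]
    simp_rw [sum_prodDist_mul_coord hQ.2 _ (fun a => Real.log (Q a / P a))]
    simp [klDiv]
  rw [hkl, ← Finset.sum_sub_distrib]
  refine Finset.sum_congr rfl fun x _ => ?_
  by_cases hx : prodDist Q x = 0
  · simp [hx]
  have hQx : ∀ i, Q (x i) ≠ 0 := fun i => (Finset.prod_ne_zero_iff.1 hx) i (Finset.mem_univ i)
  have hlog : ∑ i, Real.log (Q (x i) / P (x i))
      = Real.log (prodDist Q x) - Real.log (prodDist P x) := by
    rw [prodDist, prodDist, Real.log_prod fun i _ => hQx i,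
      Real.log_prod fun i _ => (hfull _).ne', ← Finset.sum_sub_distrib]
    exact Finset.sum_congr rfl fun i _ => Real.log_div (hQx i) (hfull _).ne'
  rw [hlog, Real.log_div (mul_pos (hP x) (hGpos x)).ne' hx,
    Real.log_mul (hP x).ne' (hGpos x).ne']
  ring

theorem rateDistortion_sub_klDiv_le_log_sum_countG [Nonempty X] [Nonempty Y] {d : X → Y → ℝ}
    {D : ℝ} {P Q : X → ℝ} (hfull : ∀ a, 0 < P a) (hQ : IsProbDist Q) {n : ℕ} (hn : n ≠ 0)
    {S : List (Fin n → Y)} (hS : ∀ x : Fin n → X, ∃ y ∈ S, meanDist d x y ≤ D) :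
    n * (rateDistortion d D Q - klDiv Q P) - Real.log (2 + n * Real.log (Fintype.card X))
      ≤ Real.log (∑ x : Fin n → X, prodDist P x * (countG d D S x : ℝ)) := by
  classical
  set s : ℕ → (Fin n → Y) := fun j =>
    if h : j - 1 < S.length then S[j - 1] else fun _ => Classical.arbitrary Y with hs
  have hG : ∀ x : Fin n → X, 1 ≤ countG d D S x := fun x =>
    (meanDist_getElem_countG_le (hS x)).1
  have h1 := rateDistortion_le_sum_prodDist_mul_log (d := d) (D := D) hQ hn (countG d D S) hG s
    (fun x => by
      obtain ⟨-, hlt, hle⟩ := meanDist_getElem_countG_le (hS x)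
      simpa only [hs, dif_pos hlt] using hle)
  have h2 := sum_prodDist_mul_log_sub_klDiv_le hfull hQ (countG d D S) hG
  linarith

end Converse

section GreedyCover

/-- Greedy covering: always guess the `y` whose ball removes the most of the potential
`∑ p x / μ(ball x)`; the expected index of the first hit is at most the initial potential. -/
lemma exists_list_sum_mul_sInf_le {α β : Type*} [Fintype β] (B : α → β → Prop)
    [∀ x, DecidablePred (B x)] {p : α → ℝ} (hp : ∀ x, 0 < p x) {μ : β → ℝ} (hμ : ∀ y, 0 < μ y)
    (hμ1 : ∑ y, μ y = 1) (hB : ∀ x, ∃ y, B x y) (A : Finset α) :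
    ∃ S : List β, (∀ x ∈ A, ∃ y ∈ S, B x y) ∧
      ∑ x ∈ A, p x * ((sInf {j : ℕ | ∃ y ∈ S.take j, B x y} : ℕ) : ℝ)
        ≤ ∑ x ∈ A, p x / ∑ y with B x y, μ y := by
  classical
  induction A using Finset.strongInduction with
  | H A ih =>
    rcases A.eq_empty_or_nonempty with rfl | hA
    · exact ⟨[], by simp, by simp⟩
    have hβ : ∀ x, 0 < ∑ y with B x y, μ y := by
      intro x
      obtain ⟨y, hy⟩ := hB x
      exact Finset.sum_pos (fun y _ => hμ y) ⟨y, by simpa using hy⟩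
    have hβne : (Finset.univ : Finset β).Nonempty := by
      obtain ⟨x, -⟩ := hA
      obtain ⟨y, -⟩ := hB x
      exact ⟨y, Finset.mem_univ y⟩
    have hdouble : ∑ y, μ y * ∑ x ∈ A with B x y, p x / ∑ y with B x y, μ y
        = ∑ y, μ y * ∑ x ∈ A, p x := by
      rw [← Finset.sum_mul, hμ1, one_mul]
      simp_rw [Finset.sum_filter _ (fun x => p x / _), Finset.mul_sum]
      rw [Finset.sum_comm]
      refine Finset.sum_congr rfl fun x _ => ?_
      have h1 : ∀ y, μ y * (if B x y then p x / ∑ y with B x y, μ y else 0)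
          = (if B x y then μ y else 0) * (p x / ∑ y with B x y, μ y) := by
        intro y
        split_ifs <;> ring
      rw [Finset.sum_congr rfl fun y _ => h1 y, ← Finset.sum_mul, ← Finset.sum_filter,
        mul_div_cancel₀ _ (hβ x).ne']
    obtain ⟨y, -, hy⟩ := Finset.exists_le_of_sum_le hβne hdouble.ge
    have hy' : ∑ x ∈ A, p x ≤ ∑ x ∈ A with B x y, p x / ∑ y with B x y, μ y :=
      le_of_mul_le_mul_left hy (hμ y)
    have hssub : A.filter (fun x => ¬ B x y) ⊂ A := by
      refine (Finset.filter_subset _ _).ssubset_of_ne fun heq => ?_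
      have hempty : A.filter (fun x => B x y) = ∅ := by
        rw [Finset.filter_eq_empty_iff]
        intro x hx
        rw [← heq] at hx
        exact (Finset.mem_filter.1 hx).2
      rw [hempty, Finset.sum_empty] at hy'
      exact absurd (Finset.sum_pos (fun x _ => hp x) hA) (not_lt.2 hy')
    obtain ⟨S, hS, hle⟩ := ih _ hssub
    refine ⟨y :: S, ?_, ?_⟩
    · intro x hx
      by_cases hxy : B x y
      · exact ⟨y, by simp, hxy⟩
      · obtain ⟨z, hz, hzB⟩ := hS x (by simp [hx, hxy])
        exact ⟨z, by simp [hz], hzB⟩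
    · have hhit : ∀ x ∈ A, B x y → sInf {j : ℕ | ∃ z ∈ (y :: S).take j, B x z} ≤ 1 :=
        fun x _ hxy => Nat.sInf_le ⟨y, by simp, hxy⟩
      have hmiss : ∀ x ∈ A, ¬ B x y → sInf {j : ℕ | ∃ z ∈ (y :: S).take j, B x z}
          ≤ 1 + sInf {j : ℕ | ∃ z ∈ S.take j, B x z} := by
        intro x hx hxy
        have hne : {j : ℕ | ∃ z ∈ S.take j, B x z}.Nonempty :=
          ⟨S.length, by simpa using hS x (by simp [hx, hxy])⟩
        obtain ⟨z, hz, hzB⟩ := Nat.sInf_mem hne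
        refine Nat.sInf_le ⟨z, ?_, hzB⟩
        rw [add_comm, List.take_succ_cons]
        exact List.mem_cons_of_mem _ hz
      calc ∑ x ∈ A, p x * ((sInf {j : ℕ | ∃ z ∈ (y :: S).take j, B x z} : ℕ) : ℝ)
          ≤ ∑ x ∈ A, (p x + if ¬ B x y then
              p x * ((sInf {j : ℕ | ∃ z ∈ S.take j, B x z} : ℕ) : ℝ) else 0) := by
            refine Finset.sum_le_sum fun x hx => ?_
            by_cases hxy : B x y
            · rw [if_neg (not_not.2 hxy), add_zero]
              exact mul_le_of_le_one_right (hp x).le (by exact_mod_cast hhit x hx hxy)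
            · rw [if_pos hxy]
              calc _ ≤ p x * (1 + ((sInf {j : ℕ | ∃ z ∈ S.take j, B x z} : ℕ) : ℝ)) :=
                    mul_le_mul_of_nonneg_left (by exact_mod_cast hmiss x hx hxy) (hp x).le
                _ = _ := by ring
        _ = ∑ x ∈ A, p x + ∑ x ∈ A with ¬ B x y,
              p x * ((sInf {j : ℕ | ∃ z ∈ S.take j, B x z} : ℕ) : ℝ) := by
            rw [Finset.sum_add_distrib, Finset.sum_filter]
        _ ≤ ∑ x ∈ A with B x y, p x / ∑ y with B x y, μ y
              + ∑ x ∈ A with ¬ B x y, p x / ∑ y with B x y, μ y := add_le_add hy' hle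
        _ = _ := Finset.sum_filter_add_sum_filter_not A (fun x => B x y) _

end GreedyCover

section Types

variable {X : Type*} [Fintype X] [DecidableEq X]

/-- Number of occurrences of a letter in a sequence. -/
def letterCount {X : Type*} [DecidableEq X] {n : ℕ} (x : Fin n → X) (a : X) : ℕ :=
  (Finset.univ.filter (fun i => x i = a)).card

lemma empDist_eq {n : ℕ} (x : Fin n → X) (a : X) : empDist x a = (letterCount x a : ℝ) / n := rfl

lemma letterCount_le {X : Type*} [DecidableEq X] {n : ℕ} (x : Fin n → X) (a : X) :
    letterCount x a ≤ n := by
  unfold letterCount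
  simpa using Finset.card_filter_le (Finset.univ : Finset (Fin n)) (fun i => x i = a)

lemma sum_comp_eq_sum_letterCount_mul {n : ℕ} (x : Fin n → X) (g : X → ℝ) :
    ∑ i, g (x i) = ∑ a, (letterCount x a : ℝ) * g a := by
  rw [← Finset.sum_fiberwise Finset.univ x]
  refine Finset.sum_congr rfl fun a _ => ?_
  rw [Finset.sum_congr rfl (g := fun _ => g a)]
  · rw [Finset.sum_const, nsmul_eq_mul]
    rfl
  · intro i hi
    rw [(Finset.mem_filter.1 hi).2]

lemma sum_letterCount {n : ℕ} (x : Fin n → X) : ∑ a, (letterCount x a : ℝ) = n := by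
  simpa using (sum_comp_eq_sum_letterCount_mul x fun _ => 1).symm

lemma isProbDist_empDist {n : ℕ} (hn : n ≠ 0) (x : Fin n → X) : IsProbDist (empDist x) := by
  refine ⟨fun a => by rw [empDist_eq]; positivity, ?_⟩
  simp_rw [empDist_eq]
  rw [← Finset.sum_div, sum_letterCount, div_self (by exact_mod_cast hn)]

lemma empDist_apply_pos {n : ℕ} (x : Fin n → X) (i : Fin n) : 0 < empDist x (x i) := by
  have hn : 0 < n := i.pos
  have hc : 0 < letterCount x (x i) := Finset.card_pos.2 ⟨i, by simp⟩
  rw [empDist_eq]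
  positivity

lemma prodDist_empDist_pos {n : ℕ} (x : Fin n → X) : 0 < prodDist (empDist x) x :=
  Finset.prod_pos fun i _ => empDist_apply_pos x i

/-- The maximum-likelihood weights have polynomial total mass. -/
lemma sum_prodDist_empDist_le {n : ℕ} (hn : n ≠ 0) :
    ∑ x : Fin n → X, prodDist (empDist x) x ≤ ((n : ℝ) + 1) ^ Fintype.card X := by
  rw [← Finset.sum_fiberwise_of_maps_to
    (fun x _ => Finset.mem_image_of_mem (empDist (X := X) (n := n)) (Finset.mem_univ x))]
  have hcard : (Finset.univ.image (empDist (X := X) (n := n))).card ≤ (n + 1) ^ Fintype.card X := by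
    have hsub : Finset.univ.image (empDist (X := X) (n := n)) ⊆
        (Fintype.piFinset fun _ : X => Finset.range (n + 1)).image
          (fun t a => (t a : ℝ) / n) := by
      intro q hq
      obtain ⟨x, -, rfl⟩ := Finset.mem_image.1 hq
      refine Finset.mem_image.2 ⟨letterCount x, ?_, rfl⟩
      rw [Fintype.mem_piFinset]
      intro a
      exact Finset.mem_range.2 (Nat.lt_succ_of_le (letterCount_le x a))
    refine (Finset.card_le_card hsub).trans (Finset.card_image_le.trans ?_)
    simp
  calc _ ≤ ∑ q ∈ Finset.univ.image (empDist (X := X) (n := n)), (1 : ℝ) := by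
        refine Finset.sum_le_sum fun q hq => ?_
        obtain ⟨z, -, rfl⟩ := Finset.mem_image.1 hq
        have hz := isProbDist_empDist hn z
        calc ∑ x with empDist x = empDist z, prodDist (empDist x) x
            = ∑ x with empDist x = empDist z, prodDist (empDist z) x := by
              refine Finset.sum_congr rfl fun x hx => ?_
              rw [(Finset.mem_filter.1 hx).2]
          _ ≤ ∑ x : Fin n → X, prodDist (empDist z) x :=
              Finset.sum_le_sum_of_subset_of_nonneg (Finset.filter_subset _ _)
                fun x _ _ => prodDist_nonneg hz.1 x
          _ = 1 := sum_prodDist_eq_one hz.2 n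
    _ ≤ _ := by
        rw [Finset.sum_const, nsmul_eq_mul, mul_one]
        exact_mod_cast hcard

/-- The likelihood ratio of a sequence is governed by the divergence of its type. -/
lemma prodDist_mul_exp_klDiv_empDist {P : X → ℝ} (hfull : ∀ a, 0 < P a) {n : ℕ}
    (hn : n ≠ 0) (x : Fin n → X) :
    prodDist P x * Real.exp (n * klDiv (empDist x) P) = prodDist (empDist x) x := by
  have hn' : (n : ℝ) ≠ 0 := by exact_mod_cast hn
  have h : n * klDiv (empDist x) P = ∑ i, Real.log (empDist x (x i) / P (x i)) := by
    rw [sum_comp_eq_sum_letterCount_mul x (fun a => Real.log (empDist x a / P a)), klDiv,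
      Finset.mul_sum]
    refine Finset.sum_congr rfl fun a _ => ?_
    rw [← mul_assoc]
    congr 1
    rw [empDist_eq]
    field_simp
  rw [h, Real.exp_sum, prodDist, ← Finset.prod_mul_distrib]
  refine Finset.prod_congr rfl fun i _ => ?_
  rw [Real.exp_log (div_pos (empDist_apply_pos x i) (hfull _)), mul_div_cancel₀ _ (hfull _).ne']

lemma letterCount_comp_perm {X : Type*} [DecidableEq X] {n : ℕ} (x : Fin n → X)
    (σ : Equiv.Perm (Fin n)) (a : X) : letterCount (x ∘ σ) a = letterCount x a := by
  refine Finset.card_bij (fun i _ => σ i) (fun i hi => by simpa using hi)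
    (fun i _ j _ h => σ.injective h) fun j hj => ⟨σ.symm j, by simpa using hj, by simp⟩

lemma prodDist_empDist_comp_perm {n : ℕ} (x : Fin n → X) (σ : Equiv.Perm (Fin n)) :
    prodDist (empDist (x ∘ σ)) (x ∘ σ) = prodDist (empDist x) x := by
  have h : empDist (x ∘ σ) = empDist x := by
    funext a
    rw [empDist_eq, empDist_eq, letterCount_comp_perm]
  rw [h]
  exact Equiv.prod_comp σ (fun i => empDist x (x i))

lemma card_stabilizer_eq_prod_factorial {n : ℕ} (x : Fin n → X) :
    (Finset.univ.filter fun σ : Equiv.Perm (Fin n) => x ∘ σ = x).card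
      = ∏ a, (letterCount x a).factorial := by
  rw [← Fintype.card_subtype, DomMulAct.stabilizer_card]
  refine Finset.prod_congr rfl fun a _ => ?_
  rw [Fintype.card_subtype]
  rfl

lemma meanDist_comp_perm {X Y : Type*} (d : X → Y → ℝ) {n : ℕ} (x : Fin n → X) (y : Fin n → Y)
    (σ : Equiv.Perm (Fin n)) : meanDist d (x ∘ σ) (y ∘ σ) = meanDist d x y := by
  unfold meanDist
  congr 1
  exact Equiv.sum_comp σ (fun i => d (x i) (y i))

end Types

section JointTypes

variable {X Y : Type*} [Fintype X] [Fintype Y] [DecidableEq X] [DecidableEq Y]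

/-- Lower bound for the size of the conditional type class of `y` given `x`. -/
lemma prod_factorial_le_mul_card_orbit {n : ℕ} (x : Fin n → X) (y : Fin n → Y) :
    ∏ a, (letterCount x a).factorial
      ≤ (∏ p : X × Y, (letterCount (fun i => (x i, y i)) p).factorial)
        * ((Finset.univ.filter fun σ : Equiv.Perm (Fin n) => x ∘ σ = x).image
            fun σ : Equiv.Perm (Fin n) => y ∘ σ).card := by
  rw [← card_stabilizer_eq_prod_factorial x,
    ← card_stabilizer_eq_prod_factorial (fun i => (x i, y i))]
  refine Finset.card_le_mul_card_image _ _ fun z hz => ?_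
  obtain ⟨τ, hτ, rfl⟩ := Finset.mem_image.1 hz
  have hτx : x ∘ τ = x := (Finset.mem_filter.1 hτ).2
  refine Finset.card_le_card_of_injOn (fun σ => σ * τ⁻¹) ?_ ?_
  · intro σ hσ
    simp only [Finset.coe_filter, Finset.mem_filter, Finset.mem_univ, true_and,
      Set.mem_ofPred_eq] at hσ ⊢
    obtain ⟨h1, h2⟩ := hσ
    funext i
    have hx1 := congrFun h1 (τ⁻¹ i)
    have hx2 := congrFun hτx (τ⁻¹ i)
    have hy := congrFun h2 (τ⁻¹ i)
    simp only [Function.comp_apply, Equiv.Perm.mul_apply] at *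
    rw [hy, hx1, ← hx2, show τ (τ⁻¹ i) = i from τ.apply_symm_apply i]
  · intro σ _ σ' _ h
    exact mul_right_cancel h

/-- Mutual information written as a function of the joint law. -/
noncomputable def jointInfo {X Y : Type*} [Fintype X] [Fintype Y] (v : X × Y → ℝ) : ℝ :=
  (∑ p, v p * Real.log (v p)) - (∑ a, (∑ b, v (a, b)) * Real.log (∑ b, v (a, b)))
    - ∑ b, (∑ a, v (a, b)) * Real.log (∑ a, v (a, b))

lemma continuous_jointInfo {X Y : Type*} [Fintype X] [Fintype Y] :
    Continuous (jointInfo (X := X) (Y := Y)) := by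
  unfold jointInfo
  refine (Continuous.sub (continuous_finsetSum _ fun p _ => ?_)
    (continuous_finsetSum _ fun a _ => ?_)).sub (continuous_finsetSum _ fun b _ => ?_)
  · exact Real.continuous_mul_log.comp (continuous_apply p)
  · exact Real.continuous_mul_log.comp (f := fun v : X × Y → ℝ => ∑ b, v (a, b)) (by fun_prop)
  · exact Real.continuous_mul_log.comp (f := fun v : X × Y → ℝ => ∑ a, v (a, b)) (by fun_prop)

lemma mutualInfo_eq_jointInfo {X Y : Type*} [Fintype X] [Fintype Y] {Q : X → ℝ}
    (hQ : ∀ x, 0 ≤ Q x) {W : X → Y → ℝ} (hW : ∀ x y, 0 ≤ W x y) (hW1 : ∀ x, ∑ y, W x y = 1) :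
    mutualInfo Q W = jointInfo (fun p : X × Y => Q p.1 * W p.1 p.2) := by
  have hrow : ∀ a, ∑ b, Q a * W a b = Q a := fun a => by rw [← Finset.mul_sum, hW1, mul_one]
  have hterm : ∀ a b, Q a * W a b * Real.log (W a b / ∑ a', Q a' * W a' b)
      = Q a * W a b * Real.log (Q a * W a b) - Q a * W a b * Real.log (Q a)
        - Q a * W a b * Real.log (∑ a', Q a' * W a' b) := by
    intro a b
    by_cases h : Q a * W a b = 0
    · simp [h]
    have hQa := left_ne_zero_of_mul h
    have hWab := right_ne_zero_of_mul h
    have hq : 0 < ∑ a', Q a' * W a' b :=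
      Finset.sum_pos' (fun a' _ => mul_nonneg (hQ a') (hW a' b))
        ⟨a, Finset.mem_univ a, (mul_nonneg (hQ a) (hW a b)).lt_of_ne' h⟩
    rw [Real.log_div hWab hq.ne', Real.log_mul hQa hWab]
    ring
  unfold mutualInfo jointInfo
  simp_rw [hterm, Finset.sum_sub_distrib, Fintype.sum_prod_type]
  congr 1
  · congr 1
    refine Finset.sum_congr rfl fun a _ => ?_
    rw [← Finset.sum_mul, hrow]
  · rw [Finset.sum_comm]
    refine Finset.sum_congr rfl fun b _ => ?_
    rw [← Finset.sum_mul]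

lemma sum_letterCount_prod_right {n : ℕ} (x : Fin n → X) (y : Fin n → Y) (a : X) :
    ∑ b, (letterCount (fun i => (x i, y i)) (a, b) : ℝ) = letterCount x a := by
  have h := sum_comp_eq_sum_letterCount_mul (fun i => (x i, y i))
    (fun p => if p.1 = a then (1 : ℝ) else 0)
  rw [sum_comp_eq_sum_letterCount_mul x (fun c => if c = a then (1 : ℝ) else 0),
    Fintype.sum_prod_type] at h
  rw [Finset.sum_comm] at h
  simpa using h.symm

lemma sum_letterCount_prod_left {n : ℕ} (x : Fin n → X) (y : Fin n → Y) (b : Y) :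
    ∑ a, (letterCount (fun i => (x i, y i)) (a, b) : ℝ) = letterCount y b := by
  have h := sum_comp_eq_sum_letterCount_mul (fun i => (x i, y i))
    (fun p => if p.2 = b then (1 : ℝ) else 0)
  rw [sum_comp_eq_sum_letterCount_mul y (fun c => if c = b then (1 : ℝ) else 0),
    Fintype.sum_prod_type] at h
  simpa using h.symm

lemma natCast_mul_jointInfo_empDist {n : ℕ} (hn : n ≠ 0) (x : Fin n → X) (y : Fin n → Y) :
    n * jointInfo (empDist (fun i => (x i, y i)))
      = ∑ p, (letterCount (fun i => (x i, y i)) p : ℝ)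
            * Real.log (letterCount (fun i => (x i, y i)) p)
        - ∑ a, (letterCount x a : ℝ) * Real.log (letterCount x a)
        - Real.log (prodDist (empDist y) y) := by
  have hn' : (n : ℝ) ≠ 0 := by exact_mod_cast hn
  have hlogdiv : ∀ k : ℝ, n * (k / n * Real.log (k / n)) = k * Real.log k - k * Real.log n := by
    intro k
    rcases eq_or_ne k 0 with rfl | hk
    · simp
    · rw [Real.log_div hk hn']
      field_simp
  have hml : Real.log (prodDist (empDist y) y)
      = ∑ b, (n * ((letterCount y b : ℝ) / n * Real.log (letterCount y b / n))) := by
    rw [prodDist, Real.log_prod fun i _ => (empDist_apply_pos y i).ne',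
      sum_comp_eq_sum_letterCount_mul y (fun b => Real.log (empDist y b))]
    refine Finset.sum_congr rfl fun b _ => ?_
    rw [empDist_eq]
    field_simp
  unfold jointInfo
  simp_rw [empDist_eq, ← Finset.sum_div, sum_letterCount_prod_right, sum_letterCount_prod_left]
  rw [hml, mul_sub, mul_sub, Finset.mul_sum, Finset.mul_sum, Finset.mul_sum]
  simp_rw [hlogdiv, Finset.sum_sub_distrib, ← Finset.sum_mul, sum_letterCount]
  ring

/-- The conditional type class of `y` given `x` has maximum-likelihood weight at least
`exp (-n I(x; y))` up to a polynomial factor. -/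
lemma exp_neg_jointInfo_le_sum_prodDist_empDist {n : ℕ} (hn : n ≠ 0) {d : X → Y → ℝ} {D : ℝ}
    {x : Fin n → X} {y : Fin n → Y} (hxy : meanDist d x y ≤ D)
    [DecidablePred fun z : Fin n → Y => meanDist d x z ≤ D] :
    Real.exp (-(n * jointInfo (empDist (fun i => (x i, y i))))
        - Fintype.card (X × Y) * (1 + Real.log n))
      ≤ ∑ z : Fin n → Y with meanDist d x z ≤ D, prodDist (empDist z) z := by
  set T := (Finset.univ.filter fun σ : Equiv.Perm (Fin n) => x ∘ σ = x).image
    (fun σ : Equiv.Perm (Fin n) => y ∘ σ) with hT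
  have hTsub : T ⊆ Finset.univ.filter fun z : Fin n → Y => meanDist d x z ≤ D := by
    intro z hz
    obtain ⟨σ, hσ, rfl⟩ := Finset.mem_image.1 hz
    have hσx : x ∘ σ = x := (Finset.mem_filter.1 hσ).2
    rw [Finset.mem_filter]
    refine ⟨Finset.mem_univ _, ?_⟩
    have := meanDist_comp_perm d x y σ
    rw [hσx] at this
    rwa [this]
  have hTpos : 0 < T.card :=
    Finset.card_pos.2 ⟨y, Finset.mem_image.2 ⟨1, by simp, by simp⟩⟩
  have hsum : T.card * prodDist (empDist y) y
      ≤ ∑ z : Fin n → Y with meanDist d x z ≤ D, prodDist (empDist z) z := by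
    calc (T.card : ℝ) * prodDist (empDist y) y = ∑ z ∈ T, prodDist (empDist z) z := by
          rw [Finset.sum_congr rfl (g := fun _ => prodDist (empDist y) y), Finset.sum_const,
            nsmul_eq_mul]
          intro z hz
          obtain ⟨σ, -, rfl⟩ := Finset.mem_image.1 hz
          exact prodDist_empDist_comp_perm y σ
      _ ≤ _ := Finset.sum_le_sum_of_subset_of_nonneg hTsub
          fun z _ _ => (prodDist_empDist_pos z).le
  refine le_trans ?_ hsum
  have hTpos' : (0 : ℝ) < T.card := by exact_mod_cast hTpos
  rw [← Real.le_log_iff_exp_le (mul_pos hTpos' (prodDist_empDist_pos y)),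
    Real.log_mul hTpos'.ne' (prodDist_empDist_pos y).ne', natCast_mul_jointInfo_empDist hn]
  set m := letterCount (fun i => (x i, y i)) with hm
  have hfac : ∑ a, Real.log (letterCount x a).factorial
      ≤ ∑ p, Real.log (m p).factorial + Real.log T.card := by
    have hne : ∀ k : ℕ, (k.factorial : ℝ) ≠ 0 := fun k => by exact_mod_cast k.factorial_ne_zero
    have h : (∏ a, ((letterCount x a).factorial : ℝ))
        ≤ (∏ p, ((m p).factorial : ℝ)) * T.card := by
      exact_mod_cast prod_factorial_le_mul_card_orbit x y
    have h2 := Real.log_le_log (Finset.prod_pos fun a _ => (by positivity)) h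
    rwa [Real.log_mul (Finset.prod_ne_zero_iff.2 fun p _ => hne _) hTpos'.ne',
      Real.log_prod fun a _ => hne _, Real.log_prod fun p _ => hne _] at h2
  have hlow : ∑ a, ((letterCount x a : ℝ) * Real.log (letterCount x a)) - n
      ≤ ∑ a, Real.log (letterCount x a).factorial := by
    rw [← sum_letterCount x, ← Finset.sum_sub_distrib]
    exact Finset.sum_le_sum fun a _ => mul_log_sub_le_log_factorial _
  have hup : ∑ p, Real.log (m p).factorial
      ≤ ∑ p, ((m p : ℝ) * Real.log (m p)) - n + Fintype.card (X × Y) * (1 + Real.log n) := by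
    have hc : (Fintype.card (X × Y) : ℝ) * (1 + Real.log n)
        = ∑ _p : X × Y, (1 + Real.log n) := by
      rw [Finset.sum_const, nsmul_eq_mul, Finset.card_univ]
    rw [hc, ← sum_letterCount (fun i => (x i, y i)), ← Finset.sum_sub_distrib,
      ← Finset.sum_add_distrib]
    refine Finset.sum_le_sum fun p _ => ?_
    have h1 := log_factorial_le_mul_log (m p)
    have h2 : Real.log (m p) ≤ Real.log n := by
      rcases Nat.eq_zero_or_pos (m p) with h0 | h0
      · rw [h0]
        simpa using Real.log_natCast_nonneg n
      · exact Real.log_le_log (by exact_mod_cast h0) (by exact_mod_cast letterCount_le _ p)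
    rw [sum_letterCount]
    linarith
  linarith

/-- A sequence with prescribed joint letter counts. -/
lemma exists_letterCount_prod_eq {X Y : Type*} [Fintype Y] [DecidableEq X] [DecidableEq Y]
    {n : ℕ} (x : Fin n → X) (m : X → Y → ℕ)
    (hm : ∀ a, ∑ b, m a b = letterCount x a) :
    ∃ y : Fin n → Y, ∀ a b, letterCount (fun i => (x i, y i)) (a, b) = m a b := by
  have hcard : ∀ a, Fintype.card {i // x i = a} = Fintype.card (Σ b, Fin (m a b)) := by
    intro a
    rw [Fintype.card_sigma, Fintype.card_subtype]
    simp only [Fintype.card_fin]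
    exact (hm a).symm
  let e : ∀ a, {i // x i = a} ≃ Σ b, Fin (m a b) := fun a => Fintype.equivOfCardEq (hcard a)
  refine ⟨fun i => (e (x i) ⟨i, rfl⟩).1, fun a b => ?_⟩
  have hcongr : ∀ i (h : x i = a), (e (x i) ⟨i, rfl⟩).1 = (e a ⟨i, h⟩).1 := by
    rintro i rfl
    rfl
  have : Fintype.card (Fin (m a b)) = letterCount (fun i => (x i, (e (x i) ⟨i, rfl⟩).1)) (a, b) := by
    rw [← Finset.card_univ]
    refine Finset.card_bij (fun k _ => ((e a).symm ⟨b, k⟩).1) ?_ ?_ ?_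
    · intro k _
      have hk := ((e a).symm ⟨b, k⟩).2
      simp only [Finset.mem_filter, Finset.mem_univ, true_and, Prod.mk.injEq]
      refine ⟨hk, ?_⟩
      rw [hcongr _ hk]
      simp
    · intro k _ k' _ h
      have h' := (e a).symm.injective (Subtype.ext h)
      simpa using h'
    · intro i hi
      simp only [Finset.mem_filter, Finset.mem_univ, true_and, Prod.mk.injEq] at hi
      obtain ⟨hia, hib⟩ := hi
      rw [hcongr i hia] at hib
      subst hib
      exact ⟨(e a ⟨i, hia⟩).2, Finset.mem_univ _, by simp⟩
  rw [← this, Fintype.card_fin]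

end JointTypes

section Rounding

/-- Round `N • W` to integers with the same sum, increasing only the coordinate `b₀`. -/
lemma exists_nat_rounding {Y : Type*} [Fintype Y] (N : ℕ) {W : Y → ℝ} (hW : ∀ y, 0 ≤ W y)
    (hW1 : ∑ y, W y = 1) (b₀ : Y) :
    ∃ m : Y → ℕ, ∑ y, m y = N ∧ (∀ y, y ≠ b₀ → (m y : ℝ) ≤ N * W y) ∧
      ∀ y, |(m y : ℝ) - N * W y| ≤ Fintype.card Y := by
  classical
  set s := (Finset.univ : Finset Y).erase b₀ with hs
  have hNW : ∀ y, 0 ≤ N * W y := fun y => mul_nonneg (by positivity) (hW y)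
  have hfl : ∀ y, (⌊N * W y⌋₊ : ℝ) ≤ N * W y := fun y => Nat.floor_le (hNW y)
  have hfl' : ∀ y, N * W y - 1 ≤ (⌊N * W y⌋₊ : ℝ) := fun y => by
    linarith [Nat.lt_floor_add_one (N * W y)]
  have hsplit : ∑ y ∈ s, N * W y + N * W b₀ = N := by
    rw [Finset.sum_erase_add _ _ (Finset.mem_univ b₀), ← Finset.mul_sum, hW1, mul_one]
  have hsumle : ∑ y ∈ s, (⌊N * W y⌋₊ : ℝ) ≤ ∑ y ∈ s, N * W y :=
    Finset.sum_le_sum fun y _ => hfl y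
  have hsumge : ∑ y ∈ s, N * W y - Fintype.card Y ≤ ∑ y ∈ s, (⌊N * W y⌋₊ : ℝ) := by
    have h := Finset.sum_le_sum fun y (_ : y ∈ s) => hfl' y
    rw [Finset.sum_sub_distrib, Finset.sum_const, nsmul_eq_mul, mul_one] at h
    have hc : (s.card : ℝ) ≤ Fintype.card Y := by exact_mod_cast Finset.card_le_univ s
    linarith
  have hleN : ∑ y ∈ s, ⌊N * W y⌋₊ ≤ N := by
    have : ((∑ y ∈ s, ⌊N * W y⌋₊ : ℕ) : ℝ) ≤ N := by
      push_cast
      linarith [hNW b₀]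
    exact_mod_cast this
  have hcard : (1 : ℝ) ≤ Fintype.card Y := by
    exact_mod_cast Fintype.card_pos_iff.2 ⟨b₀⟩
  refine ⟨fun y => if y = b₀ then N - ∑ y ∈ s, ⌊N * W y⌋₊ else ⌊N * W y⌋₊, ?_, ?_, ?_⟩
  · rw [← Finset.sum_erase_add _ _ (Finset.mem_univ b₀), if_pos rfl,
      Finset.sum_congr rfl (g := fun y => ⌊N * W y⌋₊)]
    · exact Nat.add_sub_cancel' hleN
    · intro y hy
      rw [if_neg (Finset.ne_of_mem_erase hy)]
  · intro y hy
    simpa only [if_neg hy] using hfl y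
  · intro y
    rw [abs_le]
    by_cases hy : y = b₀
    · subst hy
      simp only [if_true]
      rw [Nat.cast_sub hleN]
      push_cast
      constructor <;> linarith
    · simp only [if_neg hy]
      constructor <;> linarith [hfl y, hfl' y]

end Rounding

section Achievability

variable {X Y : Type*} [Fintype X] [Fintype Y]

/-- Every sequence `x` has a companion `y` within distortion `D` whose empirical joint law with
`x` carries hardly more information than a given admissible channel. -/
lemma eventually_exists_jointInfo_le [DecidableEq X] [DecidableEq Y] {d : X → Y → ℝ}
    (hd : ∀ x y, 0 ≤ d x y) (hzero : ∀ x, ∃ y, d x y = 0) (D : ℝ) {ε : ℝ} (hε : 0 < ε) :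
    ∀ᶠ n : ℕ in Filter.atTop, ∀ (x : Fin n → X) (W : X → Y → ℝ), (∀ a b, 0 ≤ W a b) →
      (∀ a, ∑ b, W a b = 1) → (∑ a, ∑ b, empDist x a * W a b * d a b) ≤ D →
      ∃ y : Fin n → Y, meanDist d x y ≤ D ∧
        jointInfo (empDist (fun i => (x i, y i))) ≤ mutualInfo (empDist x) W + ε := by
  have huc : UniformContinuousOn (jointInfo (X := X) (Y := Y))
      (Set.Icc (0 : X × Y → ℝ) 1) :=
    isCompact_Icc.uniformContinuousOn_of_continuous continuous_jointInfo.continuousOn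
  obtain ⟨δ, hδ, hδε⟩ := Metric.uniformContinuousOn_iff.1 huc ε hε
  have hlim : Filter.Tendsto (fun n : ℕ => (Fintype.card Y : ℝ) / n) Filter.atTop (nhds 0) :=
    tendsto_const_div_atTop_nhds_zero_nat _
  filter_upwards [hlim.eventually (gt_mem_nhds hδ), Filter.eventually_ne_atTop 0]
    with n hnδ hn x W hW hW1 hWd
  have hn' : (0 : ℝ) < n := by positivity
  choose b₀ hb₀ using hzero
  choose m hm hmle hmabs using fun a => exists_nat_rounding (letterCount x a) (hW a) (hW1 a) (b₀ a)
  obtain ⟨y, hy⟩ := exists_letterCount_prod_eq x m hm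
  set Q := empDist x with hQ
  have hQp := isProbDist_empDist hn x
  set v' : X × Y → ℝ := empDist (fun i => (x i, y i)) with hv'
  set v : X × Y → ℝ := fun p => Q p.1 * W p.1 p.2 with hv
  have hv'm : ∀ a b, v' (a, b) = (m a b : ℝ) / n := fun a b => by
    rw [hv', empDist_eq, hy]
  have hvm : ∀ a b, v (a, b) = (letterCount x a * W a b) / n := fun a b => by
    simp only [hv, hQ, empDist_eq]
    ring
  refine ⟨y, ?_, ?_⟩
  · refine le_trans ?_ hWd
    have h1 : meanDist d x y = ∑ a, ∑ b, v' (a, b) * d a b := by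
      unfold meanDist
      rw [sum_comp_eq_sum_letterCount_mul (fun i => (x i, y i)) (fun p => d p.1 p.2),
        Finset.mul_sum, Fintype.sum_prod_type]
      refine Finset.sum_congr rfl fun a _ => Finset.sum_congr rfl fun b _ => ?_
      rw [hv', empDist_eq]
      ring
    rw [h1]
    refine Finset.sum_le_sum fun a _ => Finset.sum_le_sum fun b _ => ?_
    by_cases hb : b = b₀ a
    · simp [hb, hb₀]
    · refine mul_le_mul_of_nonneg_right ?_ (hd a b)
      change v' (a, b) ≤ v (a, b)
      rw [hv'm, hvm]
      exact div_le_div_of_nonneg_right (hmle a b hb) hn'.le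
  · rw [mutualInfo_eq_jointInfo hQp.1 hW hW1]
    have hv'mem : v' ∈ Set.Icc (0 : X × Y → ℝ) 1 := by
      have hp := isProbDist_empDist hn (fun i => (x i, y i))
      refine ⟨fun p => hp.1 p, fun p => ?_⟩
      rw [Pi.one_apply, ← hp.2]
      exact Finset.single_le_sum (fun p _ => hp.1 p) (Finset.mem_univ p)
    have hvmem : v ∈ Set.Icc (0 : X × Y → ℝ) 1 := by
      refine ⟨fun p => mul_nonneg (hQp.1 _) (hW _ _), fun p => ?_⟩
      refine mul_le_one₀ ?_ (hW _ _) ?_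
      · rw [← hQp.2]
        exact Finset.single_le_sum (fun a _ => hQp.1 a) (Finset.mem_univ p.1)
      · rw [← hW1 p.1]
        exact Finset.single_le_sum (fun b _ => hW p.1 b) (Finset.mem_univ p.2)
    have hdist : dist v' v < δ := by
      refine lt_of_le_of_lt ((dist_pi_le_iff (by positivity)).2 ?_) hnδ
      rintro ⟨a, b⟩
      rw [hv'm, hvm, Real.dist_eq, ← sub_div, abs_div, abs_of_pos hn']
      exact div_le_div_of_nonneg_right (hmabs a b) hn'.le
    have h := hδε v' hv'mem v hvmem hdist
    rw [Real.dist_eq] at h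
    linarith [(abs_lt.1 h).2]

/-- Subexponential loss in the guessing bound. -/
noncomputable def guessOverhead (k l : ℕ) (n : ℕ) : ℝ :=
  (k * l : ℕ) * (1 + Real.log n) + (k + l : ℕ) * Real.log (n + 1)

theorem eventually_exists_list_log_sum_countG_le {d : X → Y → ℝ} (hd : ∀ x y, 0 ≤ d x y)
    (hzero : ∀ x, ∃ y, d x y = 0) {D : ℝ} (hD : 0 ≤ D) {P : X → ℝ} (hfull : ∀ a, 0 < P a)
    [Nonempty X] {F : ℝ} (hF : ∀ Q, IsProbDist Q → rateDistortion d D Q - klDiv Q P ≤ F)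
    {ε : ℝ} (hε : 0 < ε) :
    ∀ᶠ n : ℕ in Filter.atTop, ∃ S : List (Fin n → Y),
      (∀ x : Fin n → X, ∃ y ∈ S, meanDist d x y ≤ D) ∧
      Real.log (∑ x : Fin n → X, prodDist P x * (countG d D S x : ℝ))
        ≤ n * (F + ε) + guessOverhead (Fintype.card X) (Fintype.card Y) n := by
  classical
  filter_upwards [eventually_exists_jointInfo_le hd hzero D (half_pos hε),
    Filter.eventually_ne_atTop 0] with n hcomp hn
  have hn' : (0 : ℝ) < n := by positivity
  set C : ℝ := ∑ y : Fin n → Y, prodDist (empDist y) y with hC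
  set K : ℝ := Fintype.card (X × Y) * (1 + Real.log n) with hK
  have hYne : Nonempty (Fin n → Y) := by
    obtain ⟨y, -⟩ := hzero (Classical.arbitrary X)
    exact ⟨fun _ => y⟩
  have hCpos : 0 < C := Finset.sum_pos (fun y _ => prodDist_empDist_pos y) Finset.univ_nonempty
  have hCle : C ≤ ((n : ℝ) + 1) ^ Fintype.card Y := sum_prodDist_empDist_le hn
  have hball : ∀ x : Fin n → X, (∃ y, meanDist d x y ≤ D) ∧
      Real.exp (-(n * (rateDistortion d D (empDist x) + ε)) - K) / C
        ≤ ∑ y : Fin n → Y with meanDist d x y ≤ D, prodDist (empDist y) y / C := by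
    intro x
    obtain ⟨W, hW, hW1, hWd, hlt⟩ :=
      exists_mutualInfo_lt_rateDistortion_add hzero hD (empDist x) (half_pos hε)
    obtain ⟨y, hyD, hyI⟩ := hcomp x W hW hW1 hWd
    refine ⟨⟨y, hyD⟩, ?_⟩
    rw [← Finset.sum_div]
    refine div_le_div_of_nonneg_right
      (le_trans ?_ (exp_neg_jointInfo_le_sum_prodDist_empDist hn hyD)) hCpos.le
    rw [Real.exp_le_exp]
    have : n * jointInfo (empDist (fun i => (x i, y i)))
        ≤ n * (rateDistortion d D (empDist x) + ε) :=
      mul_le_mul_of_nonneg_left (by linarith) hn'.le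
    linarith
  obtain ⟨S, hS, hle⟩ := exists_list_sum_mul_sInf_le
    (fun (x : Fin n → X) (y : Fin n → Y) => meanDist d x y ≤ D) (p := prodDist P)
    (prodDist_pos hfull) (μ := fun y => prodDist (empDist y) y / C)
    (fun y => div_pos (prodDist_empDist_pos y) hCpos)
    (by rw [← Finset.sum_div, div_self hCpos.ne']) (fun x => (hball x).1) Finset.univ
  have hcov : ∀ x : Fin n → X, ∃ y ∈ S, meanDist d x y ≤ D := fun x => hS x (Finset.mem_univ x)
  refine ⟨S, hcov, ?_⟩
  have hbound : ∑ x : Fin n → X, prodDist P x * (countG d D S x : ℝ)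
      ≤ C * Real.exp (n * (F + ε) + K) * ((n : ℝ) + 1) ^ Fintype.card X := by
    refine hle.trans ?_
    calc ∑ x : Fin n → X,
          prodDist P x / ∑ y : Fin n → Y with meanDist d x y ≤ D, prodDist (empDist y) y / C
        ≤ ∑ x : Fin n → X, C * Real.exp (n * (F + ε) + K) * prodDist (empDist x) x := by
          refine Finset.sum_le_sum fun x _ => ?_
          have hPx := prodDist_pos hfull x
          calc _ ≤ prodDist P x /
                (Real.exp (-(n * (rateDistortion d D (empDist x) + ε)) - K) / C) :=
                div_le_div_of_nonneg_left hPx.le (by positivity) (hball x).2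
            _ = C * prodDist P x * Real.exp (n * (rateDistortion d D (empDist x) + ε) + K) := by
                rw [show -(n * (rateDistortion d D (empDist x) + ε)) - K
                  = -(n * (rateDistortion d D (empDist x) + ε) + K) by ring, Real.exp_neg]
                field_simp
            _ ≤ C * prodDist P x *
                  Real.exp ((n * (F + ε) + K) + n * klDiv (empDist x) P) := by
                refine mul_le_mul_of_nonneg_left (Real.exp_le_exp.2 ?_) (by positivity)
                have := mul_le_mul_of_nonneg_left (hF _ (isProbDist_empDist hn x)) hn'.le
                linarith
            _ = C * Real.exp (n * (F + ε) + K) *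
                  (prodDist P x * Real.exp (n * klDiv (empDist x) P)) := by
                rw [Real.exp_add]
                ring
            _ = _ := by rw [prodDist_mul_exp_klDiv_empDist hfull hn]
      _ ≤ _ := by
          rw [← Finset.mul_sum]
          exact mul_le_mul_of_nonneg_left (sum_prodDist_empDist_le hn) (by positivity)
  have hpos : 0 < ∑ x : Fin n → X, prodDist P x * (countG d D S x : ℝ) :=
    Finset.sum_pos (fun x _ => mul_pos (prodDist_pos hfull x)
      (by exact_mod_cast (meanDist_getElem_countG_le (hcov x)).1)) Finset.univ_nonempty
  have hlog := Real.log_le_log hpos hbound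
  rw [Real.log_mul (by positivity) (by positivity), Real.log_mul hCpos.ne' (by positivity),
    Real.log_exp, Real.log_pow] at hlog
  have hlogC := Real.log_le_log hCpos hCle
  rw [Real.log_pow] at hlogC
  have hKeq : K = ((Fintype.card X * Fintype.card Y : ℕ) : ℝ) * (1 + Real.log n) := by
    rw [hK, Fintype.card_prod]
  unfold guessOverhead
  rw [← hKeq]
  push_cast
  linarith

end Achievability

section Limits

lemma tendsto_log_add_one_div_natCast :
    Filter.Tendsto (fun n : ℕ => Real.log ((n : ℝ) + 1) / n) Filter.atTop (nhds 0) := by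
  have h := (Real.isLittleO_log_id_atTop.comp_tendsto
    (Filter.tendsto_atTop_add_const_right _ (1 : ℝ) (tendsto_natCast_atTop_atTop (R := ℝ))))
  have h2 : (fun n : ℕ => (n : ℝ) + 1) =O[Filter.atTop] fun n : ℕ => (n : ℝ) := by
    refine Asymptotics.IsBigO.of_bound 2 ?_
    filter_upwards [Filter.eventually_ge_atTop 1] with n hn
    have : (1 : ℝ) ≤ n := by exact_mod_cast hn
    rw [Real.norm_of_nonneg (by positivity), Real.norm_of_nonneg (by positivity)]
    linarith
  exact (h.trans_isBigO h2).tendsto_div_nhds_zero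

lemma tendsto_log_natCast_div :
    Filter.Tendsto (fun n : ℕ => Real.log (n : ℝ) / n) Filter.atTop (nhds 0) :=
  (Real.isLittleO_log_id_atTop.comp_tendsto tendsto_natCast_atTop_atTop).tendsto_div_nhds_zero

lemma tendsto_guessOverhead_div (k l : ℕ) :
    Filter.Tendsto (fun n : ℕ => guessOverhead k l n / n) Filter.atTop (nhds 0) := by
  have h := ((tendsto_one_div_atTop_nhds_zero_nat (𝕜 := ℝ)).add
    tendsto_log_natCast_div).const_mul (((k * l : ℕ) : ℝ)) |>.add
      (tendsto_log_add_one_div_natCast.const_mul (((k + l : ℕ) : ℝ)))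
  rw [add_zero, mul_zero, mul_zero, add_zero] at h
  refine h.congr fun n => ?_
  unfold guessOverhead
  ring

lemma tendsto_log_two_add_mul_div {c : ℝ} (hc : 0 ≤ c) :
    Filter.Tendsto (fun n : ℕ => Real.log (2 + n * c) / n) Filter.atTop (nhds 0) := by
  have h := ((tendsto_const_div_atTop_nhds_zero_nat (Real.log (2 + c))).add
    tendsto_log_add_one_div_natCast)
  rw [add_zero] at h
  refine tendsto_of_tendsto_of_tendsto_of_le_of_le tendsto_const_nhds h (fun n => ?_) fun n => ?_
  · have : (0 : ℝ) ≤ n * c := by positivity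
    exact div_nonneg (Real.log_nonneg (by linarith)) (by positivity)
  · dsimp only
    rw [← add_div, ← Real.log_mul (by positivity) (by positivity)]
    refine div_le_div_of_nonneg_right (Real.log_le_log (by positivity) ?_) (by positivity)
    nlinarith [(Nat.cast_nonneg n : (0 : ℝ) ≤ n)]

end Limits

theorem stmt12 {X Y : Type*} [Fintype X] [Fintype Y] [Nonempty X] [Nonempty Y]
    (d : X → Y → ℝ) (hd : ∀ x y, 0 ≤ d x y)
    (hzero : ∀ x, ∃ y, d x y = 0)
    (D : ℝ) (hD : 0 ≤ D)
    (P : X → ℝ) (hP : IsProbDist P) (hfull : ∀ a, 0 < P a) :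
    Filter.liminf
        (fun n : ℕ => (1 / (n : ℝ)) *
          sInf {r | ∃ S : List (Fin n → Y),
            (∀ x : Fin n → X, ∃ y ∈ S, meanDist d x y ≤ D) ∧
            r = Real.log (∑ x : Fin n → X, prodDist P x * (countG d D S x : ℝ))})
        Filter.atTop
      = sSup {r | ∃ Q : X → ℝ, IsProbDist Q ∧
          r = rateDistortion d D Q - klDiv Q P} := by
  set A : ℕ → Set ℝ := fun n => {r | ∃ S : List (Fin n → Y),
    (∀ x : Fin n → X, ∃ y ∈ S, meanDist d x y ≤ D) ∧
    r = Real.log (∑ x : Fin n → X, prodDist P x * (countG d D S x : ℝ))} with hA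
  set E : Set ℝ := {r | ∃ Q : X → ℝ, IsProbDist Q ∧ r = rateDistortion d D Q - klDiv Q P} with hE
  set c : ℝ := Real.log (Fintype.card X) with hc
  have hc0 : 0 ≤ c := Real.log_natCast_nonneg _
  have hconv : ∀ n : ℕ, n ≠ 0 → ∀ r ∈ A n, ∀ e ∈ E, n * e - Real.log (2 + n * c) ≤ r := by
    rintro n hn r ⟨S, hS, rfl⟩ e ⟨Q, hQ, rfl⟩
    exact rateDistortion_sub_klDiv_le_log_sum_countG hfull hQ hn hS
  have hEne : E.Nonempty := ⟨_, P, hP, rfl⟩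
  have hAne : ∀ n : ℕ, (A n).Nonempty := by
    intro n
    choose g hg using hzero
    refine ⟨_, (Finset.univ : Finset (Fin n → X)).toList.map (fun x i => g (x i)), ?_, rfl⟩
    intro x
    refine ⟨fun i => g (x i), List.mem_map.2 ⟨x, by simp, rfl⟩, ?_⟩
    simp [meanDist, hg, hD]
  have hAbdd : ∀ n : ℕ, n ≠ 0 → BddBelow (A n) := by
    intro n hn
    obtain ⟨e, he⟩ := hEne
    exact ⟨_, fun r hr => hconv n hn r hr e he⟩
  have hEbdd : BddAbove E := by
    obtain ⟨r, hr⟩ := hAne 1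
    refine ⟨r + Real.log (2 + c), fun e he => ?_⟩
    have := hconv 1 one_ne_zero r hr e he
    simp only [Nat.cast_one, one_mul] at this
    linarith
  have hlow : ∀ n : ℕ, n ≠ 0 →
      sSup E - Real.log (2 + n * c) / n ≤ (1 / (n : ℝ)) * sInf (A n) := by
    intro n hn
    have hn' : (0 : ℝ) < n := by positivity
    rw [sub_le_iff_le_add]
    refine csSup_le hEne fun e he => ?_
    have h := le_csInf (hAne n) fun r hr => hconv n hn r hr e he
    rw [one_div_mul_eq_div, ← add_div, le_div_iff₀ hn']
    linarith
  refine Filter.Tendsto.liminf_eq ?_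
  rw [Metric.tendsto_atTop']
  intro ε hε
  have hup := eventually_exists_list_log_sum_countG_le hd hzero hD hfull (F := sSup E)
    (fun Q hQ => le_csSup hEbdd ⟨Q, hQ, rfl⟩) (half_pos hε)
  have hover := (tendsto_guessOverhead_div (Fintype.card X) (Fintype.card Y)).eventually
    (gt_mem_nhds (half_pos hε))
  have hloss := (tendsto_log_two_add_mul_div hc0).eventually (gt_mem_nhds hε)
  obtain ⟨N, hN⟩ := Filter.eventually_atTop.1
    (((hup.and hover).and hloss).and (Filter.eventually_ne_atTop 0))
  refine ⟨N, fun n hnN => ?_⟩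
  obtain ⟨⟨⟨⟨S, hS, hSle⟩, ho⟩, hl⟩, hn⟩ := hN n hnN.le
  have hn' : (0 : ℝ) < n := by positivity
  have h1 := hlow n hn
  have h2 : sInf (A n) ≤ _ := (csInf_le (hAbdd n hn) ⟨S, hS, rfl⟩).trans hSle
  have h3 : (1 / (n : ℝ)) * sInf (A n)
      ≤ sSup E + ε / 2 + guessOverhead (Fintype.card X) (Fintype.card Y) n / n := by
    rw [one_div_mul_eq_div, div_le_iff₀ hn', add_mul, div_mul_cancel₀ _ hn'.ne']
    linarith
  rw [Real.dist_eq, abs_lt]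
  constructor <;> linarith
end

section
/- (Conditional type covering lemma) For finite alphabets X, Y, Z, any distortion measure d on X × Y, any δ > 0, there is n₀ such that for n ≥ n₀, any z^n ∈ Z^n, any joint type Q of pairs in X^n × Z^n with Z-marginal equal to the type of z^n, and any D ≥ 0, there exists B_Z(z^n) ⊆ Y^n with (1/n) log|B_Z(z^n)| ≤ R_{X|Z}(D, Q) + δ and min_{y^n ∈ B_Z(z^n)} d^(n)(x^n, y^n) ≤ D for every x^n in the conditional type class T_V^n(z^n) determined by Q. -/
open scoped BigOperators

/-- Conditional mutual information `I(X;Y|Z)` under the joint law `Q(x,z)W(y|x,z)`. -/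
noncomputable def condMutualInfo {X Z Y : Type*} [Fintype X] [Fintype Z] [Fintype Y]
    (Q : X → Z → ℝ) (W : X → Z → Y → ℝ) : ℝ :=
  ∑ x, ∑ z, ∑ y, Q x z * W x z y *
    Real.log (W x z y * (∑ x', Q x' z) / (∑ x', Q x' z * W x' z y))

/-- Conditional rate-distortion function `R_{X|Z}(D,Q)` (side information at both
encoder and decoder). -/
noncomputable def condRateDistortion {X Z Y : Type*} [Fintype X] [Fintype Z] [Fintype Y]
    (d : X → Y → ℝ) (D : ℝ) (Q : X → Z → ℝ) : ℝ :=
  sInf {r | ∃ W : X → Z → Y → ℝ, (∀ x z y, 0 ≤ W x z y) ∧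
    (∀ x z, ∑ y, W x z y = 1) ∧
    (∑ x, ∑ z, ∑ y, Q x z * W x z y * d x y) ≤ D ∧
    r = condMutualInfo Q W}

/-- A joint probability distribution on `X × Z`. -/
def IsJointProbDist {X Z : Type*} [Fintype X] [Fintype Z] (p : X → Z → ℝ) : Prop :=
  (∀ x z, 0 ≤ p x z) ∧ ∑ x, ∑ z, p x z = 1

/-- Relative entropy between joint distributions on `X × Z`. -/
noncomputable def klDiv2 {X Z : Type*} [Fintype X] [Fintype Z]
    (Q P : X → Z → ℝ) : ℝ :=
  ∑ x, ∑ z, Q x z * Real.log (Q x z / P x z)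

/-- Joint empirical distribution of a pair of sequences. -/
noncomputable def jointEmpDist {X Z : Type*} [DecidableEq X] [DecidableEq Z] {n : ℕ}
    (x : Fin n → X) (z : Fin n → Z) (a : X) (b : Z) : ℝ :=
  ((Finset.univ.filter (fun i : Fin n => x i = a ∧ z i = b)).card : ℝ) / n

theorem card_conditional_type_class {S Y : Type*} [Fintype S] [Fintype Y] [DecidableEq S]
    [DecidableEq Y] {n : ℕ} (s : Fin n → S) (k : S → Y → ℕ)
    (hk : ∀ σ, ∑ c, k σ c = (Finset.univ.filter fun i => s i = σ).card) :
    (Finset.univ.filter fun y : Fin n → Y =>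
        ∀ σ c, (Finset.univ.filter fun i => s i = σ ∧ y i = c).card = k σ c).card *
      ∏ p : S × Y, (k p.1 p.2).factorial =
    ∏ σ, ((Finset.univ.filter fun i => s i = σ).card).factorial := by
  induction n generalizing k with
  | zero =>
    have h0 : ∀ σ c, k σ c = 0 := by
      intro σ c
      have := hk σ
      simp at this
      exact this c
    simp [h0]
  | succ n ih =>
    set N : S → ℕ := fun σ => (Finset.univ.filter fun i : Fin n => s i.succ = σ).card with hN
    have hcount : ∀ σ, (Finset.univ.filter fun i => s i = σ).card =
        (if s 0 = σ then 1 else 0) + N σ := by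
      intro σ
      rw [Fin.card_filter_univ_succ]
      split_ifs <;> simp [hN, add_comm]
    have hfact : ∏ σ, ((Finset.univ.filter fun i => s i = σ).card).factorial =
        (N (s 0) + 1) * ∏ σ, (N σ).factorial := by
      rw [← Finset.mul_prod_erase _ _ (Finset.mem_univ (s 0)),
        ← Finset.mul_prod_erase _ (fun σ => (N σ).factorial) (Finset.mem_univ (s 0)), hcount]
      rw [if_pos rfl, add_comm 1, Nat.factorial_succ, mul_assoc]
      congr 2
      refine Finset.prod_congr rfl fun σ hσ => ?_
      rw [hcount, if_neg (Finset.ne_of_mem_erase hσ).symm, zero_add]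
    have hsplit : (Finset.univ.filter fun y : Fin (n + 1) → Y =>
        ∀ σ c, (Finset.univ.filter fun i => s i = σ ∧ y i = c).card = k σ c).card =
        ∑ c₀, (Finset.univ.filter fun y : Fin n → Y =>
          ∀ σ c, (if s 0 = σ ∧ c₀ = c then 1 else 0) +
            (Finset.univ.filter fun i => s i.succ = σ ∧ y i = c).card = k σ c).card := by
      rw [Finset.sum_congr rfl fun c₀ _ => Finset.card_filter _ _, Finset.card_filter,
        ← Fintype.sum_prod_type', ← (Fin.consEquiv fun _ => Y).sum_comp]
      refine Finset.sum_congr rfl fun p _ => ?_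
      congr 1
      refine propext (forall_congr' fun σ => forall_congr' fun c => ?_)
      rw [Fin.card_filter_univ_succ]
      simp only [Fin.consEquiv, Equiv.coe_fn_mk, Fin.cons_zero, Fin.cons_succ]
      split_ifs <;> simp [add_comm]
    rw [hsplit, hfact, Finset.sum_mul]
    have hterm : ∀ c₀, (Finset.univ.filter fun y : Fin n → Y =>
          ∀ σ c, (if s 0 = σ ∧ c₀ = c then 1 else 0) +
            (Finset.univ.filter fun i => s i.succ = σ ∧ y i = c).card = k σ c).card *
          ∏ p : S × Y, (k p.1 p.2).factorial = k (s 0) c₀ * ∏ σ, (N σ).factorial := by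
      intro c₀
      rcases Nat.eq_zero_or_pos (k (s 0) c₀) with h | h
      · rw [h, zero_mul, Finset.card_eq_zero.2, zero_mul]
        refine Finset.filter_eq_empty_iff.2 fun y _ hy => ?_
        have := hy (s 0) c₀
        simp [h] at this
      · set k' : S → Y → ℕ := fun σ c => k σ c - if s 0 = σ ∧ c₀ = c then 1 else 0 with hk'
        have hkk : ∀ σ c, k σ c = (if s 0 = σ ∧ c₀ = c then 1 else 0) + k' σ c := by
          intro σ c
          simp only [hk']
          split_ifs with hc
          · obtain ⟨rfl, rfl⟩ := hc
            omega
          · omega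
        have hsum : ∀ σ, ∑ c, k' σ c = N σ := by
          intro σ
          have h1 := hk σ
          rw [hcount, Finset.sum_congr rfl fun c _ => hkk σ c, Finset.sum_add_distrib] at h1
          have h2 : ∑ c, (if s 0 = σ ∧ c₀ = c then 1 else 0) = if s 0 = σ then 1 else 0 := by
            by_cases hσ : s 0 = σ <;> simp [hσ]
          omega
        have hprod : ∏ p : S × Y, (k p.1 p.2).factorial =
            k (s 0) c₀ * ∏ p : S × Y, (k' p.1 p.2).factorial := by
          rw [← Finset.mul_prod_erase _ _ (Finset.mem_univ (s 0, c₀)),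
            ← Finset.mul_prod_erase _ (fun p : S × Y => (k' p.1 p.2).factorial)
              (Finset.mem_univ (s 0, c₀)), ← mul_assoc]
          congr 1
          · have : k (s 0) c₀ = k' (s 0) c₀ + 1 := by rw [hkk]; simp [add_comm]
            simp only [this, Nat.factorial_succ]
          · refine Finset.prod_congr rfl fun p hp => ?_
            rw [hkk, if_neg, zero_add]
            rintro ⟨h1, h2⟩
            exact Finset.ne_of_mem_erase hp (Prod.ext h1.symm h2.symm)
        have := ih (fun i => s i.succ) k' hsum
        rw [hprod, mul_left_comm]
        simp only [hN]
        rw [← this]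
        congr 3
        ext y
        simp only [Finset.mem_filter, Finset.mem_univ, true_and]
        refine forall_congr' fun σ => forall_congr' fun c => ?_
        rw [hkk]
        omega
    rw [Finset.sum_congr rfl fun c₀ _ => hterm c₀, ← Finset.sum_mul, hk, hcount, if_pos rfl,
      add_comm]

theorem log_factorial_ge_s16 (m : ℕ) :
    -Real.negMulLog m - m ≤ Real.log (m.factorial : ℝ) := by
  induction m with
  | zero => simp
  | succ m ih =>
    rw [Nat.factorial_succ, Nat.cast_mul, Real.log_mul (by positivity) (by positivity)]
    rcases Nat.eq_zero_or_pos m with rfl | hm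
    · simp
    have hm' : (0 : ℝ) < m := by exact_mod_cast hm
    have h := Real.log_le_sub_one_of_pos (show (0 : ℝ) < (m + 1) / m by positivity)
    rw [Real.log_div (by positivity) (by positivity)] at h
    have h2 := mul_le_mul_of_nonneg_left h hm'.le
    have h3 : (m : ℝ) * ((m + 1) / m - 1) = 1 := by field_simp; ring
    simp only [Real.negMulLog] at ih ⊢
    push_cast
    nlinarith

theorem log_factorial_le_s16 {m n : ℕ} (hmn : m ≤ n) :
    Real.log (m.factorial : ℝ) ≤ -Real.negMulLog m - m + (1 + Real.log (n + 1)) := by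
  have hn : 0 ≤ Real.log ((n : ℝ) + 1) := Real.log_nonneg (by linarith [n.cast_nonneg (α := ℝ)])
  rcases Nat.eq_zero_or_pos m with rfl | hm
  · simpa using by linarith
  have key : Real.log (m.factorial : ℝ) ≤ (m + 1) * Real.log m - m + 1 := by
    clear hmn
    induction m, hm using Nat.le_induction with
    | base => simp
    | succ m hm ih =>
      have hm' : (0 : ℝ) < m := by exact_mod_cast hm
      rw [Nat.factorial_succ, Nat.cast_mul, Real.log_mul (by positivity) (by positivity)]
      have h := Real.one_sub_inv_le_log_of_pos (show (0 : ℝ) < (m + 1) / m by positivity)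
      rw [Real.log_div (by positivity) (by positivity)] at h
      have h2 := mul_le_mul_of_nonneg_left h (by positivity : (0 : ℝ) ≤ m + 1)
      have h3 : ((m : ℝ) + 1) * (1 - (((m : ℝ) + 1) / m)⁻¹) = 1 := by field_simp; ring
      push_cast
      nlinarith
  have h4 : Real.log m ≤ Real.log (n + 1) :=
    Real.log_le_log (by exact_mod_cast hm) (by exact_mod_cast hmn.trans n.le_succ)
  simp only [Real.negMulLog]
  linarith

theorem exists_covering {α Ω : Type*} [Fintype Ω] (μ : Ω → ℝ) (hμ : ∀ ω, 0 ≤ μ ω)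
    (hμ1 : ∑ ω, μ ω = 1) (A : Finset α) (G : α → Ω → Prop)
    [∀ x, DecidablePred (G x)] [DecidableEq Ω] (p : ℝ) (hp1 : p ≤ 1)
    (hp : ∀ x ∈ A, p ≤ ∑ ω with G x ω, μ ω) (M : ℕ) :
    ∃ B : Finset Ω, B.card ≤ M ∧
      ((A.filter fun x => ∀ ω ∈ B, ¬ G x ω).card : ℝ) ≤ (1 - p) ^ M * A.card := by
  induction M with
  | zero => exact ⟨∅, by simp, by simp⟩
  | succ M ih =>
    obtain ⟨B, hB, hBc⟩ := ih
    set A' := A.filter fun x => ∀ ω ∈ B, ¬ G x ω with hA'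
    obtain ⟨ω, hω⟩ : ∃ ω, ((A'.filter fun x => ¬ G x ω).card : ℝ) ≤ (1 - p) * A'.card := by
      by_contra! hcon
      have h1 : ∑ ω, μ ω * ((A'.filter fun x => ¬ G x ω).card : ℝ) ≤ (1 - p) * A'.card := by
        calc ∑ ω, μ ω * ((A'.filter fun x => ¬ G x ω).card : ℝ)
            = ∑ x ∈ A', ∑ ω with ¬ G x ω, μ ω := by
              simp only [Finset.card_filter, Nat.cast_sum, Finset.mul_sum, Finset.sum_filter]
              rw [Finset.sum_comm]
              simp
          _ ≤ ∑ x ∈ A', (1 - p) := by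
              refine Finset.sum_le_sum fun x hx => ?_
              have := Finset.sum_filter_add_sum_filter_not Finset.univ (G x) μ
              have := hp x (Finset.mem_filter.1 hx).1
              linarith
          _ = (1 - p) * A'.card := by rw [Finset.sum_const, nsmul_eq_mul, mul_comm]
      obtain ⟨ω, -, hω⟩ : ∃ ω ∈ (Finset.univ : Finset Ω), 0 < μ ω := by
        by_contra! h
        have := Finset.sum_nonpos h
        linarith
      have h2 : ∑ ω, μ ω * ((1 - p) * A'.card) <
          ∑ ω, μ ω * ((A'.filter fun x => ¬ G x ω).card : ℝ) :=
        Finset.sum_lt_sum (fun ω _ => mul_le_mul_of_nonneg_left (hcon ω).le (hμ ω))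
          ⟨ω, Finset.mem_univ _, mul_lt_mul_of_pos_left (hcon ω) hω⟩
      rw [← Finset.sum_mul, hμ1, one_mul] at h2
      linarith
    refine ⟨insert ω B, (Finset.card_insert_le _ _).trans (by omega), ?_⟩
    have heq : (A.filter fun x => ∀ ω' ∈ insert ω B, ¬ G x ω') = A'.filter fun x => ¬ G x ω := by
      ext x
      simp only [hA', Finset.mem_filter, Finset.mem_insert, forall_eq_or_imp]
      tauto
    rw [heq, pow_succ]
    calc _ ≤ (1 - p) * A'.card := hω
      _ ≤ (1 - p) * ((1 - p) ^ M * A.card) := mul_le_mul_of_nonneg_left hBc (by linarith)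
      _ = _ := by ring

/-- Entropy form of `I(X;Y|Z)`: here `Q` stands for the `X × Z` marginal of
`v`, and neither need be normalised. -/
noncomputable def entropyForm {X Z Y : Type*} [Fintype X] [Fintype Z] [Fintype Y]
    (Q : X → Z → ℝ) (v : X → Z → Y → ℝ) : ℝ :=
  (∑ a, ∑ b, (Q a b).negMulLog) + (∑ b, ∑ c, (∑ a, v a b c).negMulLog) -
    (∑ b, (∑ a, Q a b).negMulLog) - ∑ a, ∑ b, ∑ c, (v a b c).negMulLog

theorem condMutualInfo_eq_entropyForm {X Z Y : Type*} [Fintype X] [Fintype Z] [Fintype Y]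
    {Q : X → Z → ℝ} {W : X → Z → Y → ℝ} (hQ : ∀ a b, 0 ≤ Q a b) (hW : ∀ a b c, 0 ≤ W a b c)
    (hW1 : ∀ a b, ∑ c, W a b c = 1) :
    condMutualInfo Q W = entropyForm Q fun a b c => Q a b * W a b c := by
  have hterm : ∀ a b c, Q a b * W a b c *
      Real.log (W a b c * (∑ a', Q a' b) / ∑ a', Q a' b * W a' b c) =
      -(Q a b * W a b c).negMulLog + (Q a b * W a b c) * Real.log (∑ a', Q a' b) -
      (Q a b * Real.log (Q a b)) * W a b c -
      (Q a b * W a b c) * Real.log (∑ a', Q a' b * W a' b c) := by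
    intro a b c
    rcases (hQ a b).eq_or_lt with h | hq
    · simp [← h]
    rcases (hW a b c).eq_or_lt with h | hw
    · simp [← h]
    have h1 : 0 < ∑ a', Q a' b :=
      hq.trans_le (Finset.single_le_sum (fun a _ => hQ a b) (Finset.mem_univ a))
    have h2 : 0 < ∑ a', Q a' b * W a' b c :=
      (mul_pos hq hw).trans_le (Finset.single_le_sum (f := fun a => Q a b * W a b c)
        (fun a _ => mul_nonneg (hQ a b) (hW a b c)) (Finset.mem_univ a))
    rw [Real.log_div (by positivity) h2.ne', Real.log_mul hw.ne' h1.ne', Real.negMulLog,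
      Real.log_mul hq.ne' hw.ne']
    ring
  unfold condMutualInfo entropyForm
  simp only [hterm, Finset.sum_add_distrib, Finset.sum_sub_distrib, Finset.sum_neg_distrib]
  have e1 : ∑ a, ∑ b, ∑ c, (Q a b * W a b c) * Real.log (∑ a', Q a' b) =
      -∑ b, (∑ a, Q a b).negMulLog := by
    simp only [← Finset.sum_mul, ← Finset.mul_sum, hW1, mul_one]
    rw [Finset.sum_comm]
    simp only [← Finset.sum_mul, Real.negMulLog, neg_mul, Finset.sum_neg_distrib, neg_neg]
  have e2 : ∑ a, ∑ b, ∑ c, (Q a b * Real.log (Q a b)) * W a b c =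
      -∑ a, ∑ b, (Q a b).negMulLog := by
    simp only [← Finset.mul_sum, hW1, mul_one, Real.negMulLog, neg_mul, Finset.sum_neg_distrib,
      neg_neg]
  have e3 : ∑ a, ∑ b, ∑ c, (Q a b * W a b c) * Real.log (∑ a', Q a' b * W a' b c) =
      -∑ b, ∑ c, (∑ a, Q a b * W a b c).negMulLog := by
    rw [Finset.sum_comm]
    simp only [← Finset.sum_neg_distrib]
    refine Finset.sum_congr rfl fun b _ => ?_
    rw [Finset.sum_comm]
    simp only [← Finset.sum_mul, Real.negMulLog, neg_mul, neg_neg]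
  rw [e1, e2, e3]
  ring

theorem entropyForm_smul {X Z Y : Type*} [Fintype X] [Fintype Z] [Fintype Y]
    (t : ℝ) (Q : X → Z → ℝ) (v : X → Z → Y → ℝ) :
    entropyForm (fun a b => t * Q a b) (fun a b c => t * v a b c) = t * entropyForm Q v := by
  unfold entropyForm
  simp only [← Finset.mul_sum, Real.negMulLog_mul, Finset.sum_add_distrib, ← Finset.sum_mul]
  have h1 : ∑ b, ∑ a, Q a b = ∑ a, ∑ b, Q a b := Finset.sum_comm
  have h2 : ∑ b, ∑ c, ∑ a, v a b c = ∑ a, ∑ b, ∑ c, v a b c := by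
    rw [Finset.sum_comm (s := (Finset.univ : Finset X))]
    exact Finset.sum_congr rfl fun b _ => Finset.sum_comm
  rw [h1, h2]
  ring

theorem exists_entropyForm_le (X Z Y : Type*) [Fintype X] [Fintype Z] [Fintype Y]
    [Nonempty X] {ε : ℝ} (hε : 0 < ε) :
    ∃ ρ > 0, ∀ (Q : X → Z → ℝ) (v w : X → Z → Y → ℝ),
      (∀ a b c, 0 ≤ v a b c) → (∀ a b c, 0 ≤ w a b c) →
      (∀ b c, ∑ a, v a b c ≤ 1) → (∀ b c, ∑ a, w a b c ≤ 1) →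
      (∀ a b c, |v a b c - w a b c| ≤ ρ) → entropyForm Q v ≤ entropyForm Q w + ε := by
  set C : ℝ := Fintype.card Z * Fintype.card Y +
    Fintype.card X * (Fintype.card Z * Fintype.card Y) + 1 with hC
  have hCpos : 0 < C := by positivity
  have huc : UniformContinuousOn Real.negMulLog (Set.Icc 0 1) :=
    isCompact_Icc.uniformContinuousOn_of_continuous Real.continuous_negMulLog.continuousOn
  obtain ⟨τ, hτ, hcont⟩ := Metric.uniformContinuousOn_iff_le.1 huc (ε / C) (by positivity)
  have hX : (1 : ℝ) ≤ Fintype.card X := by exact_mod_cast Fintype.card_pos (α := X)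
  refine ⟨τ / Fintype.card X, by positivity, fun Q v w hv hw hv1 hw1 hvw => ?_⟩
  have hle : ∀ u : X → Z → Y → ℝ, (∀ a b c, 0 ≤ u a b c) → (∀ b c, ∑ a, u a b c ≤ 1) →
      ∀ a b c, u a b c ≤ 1 := fun u hu hu1 a b c =>
    (Finset.single_le_sum (f := fun a => u a b c) (fun a _ => hu a b c)
      (Finset.mem_univ a)).trans (hu1 b c)
  have h1 : ∀ b c, (∑ a, v a b c).negMulLog ≤ (∑ a, w a b c).negMulLog + ε / C := by
    intro b c
    have := hcont (∑ a, v a b c) ⟨Finset.sum_nonneg fun a _ => hv a b c, hv1 b c⟩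
      (∑ a, w a b c) ⟨Finset.sum_nonneg fun a _ => hw a b c, hw1 b c⟩ (by
        rw [Real.dist_eq, ← Finset.sum_sub_distrib]
        refine (Finset.abs_sum_le_sum_abs _ _).trans
          ((Finset.sum_le_sum fun a _ => hvw a b c).trans (le_of_eq ?_))
        rw [Finset.sum_const, nsmul_eq_mul, Finset.card_univ]
        field_simp)
    rw [Real.dist_eq] at this
    linarith [le_abs_self ((∑ a, v a b c).negMulLog - (∑ a, w a b c).negMulLog)]
  have h2 : ∀ a b c, (w a b c).negMulLog ≤ (v a b c).negMulLog + ε / C := by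
    intro a b c
    have := hcont (v a b c) ⟨hv a b c, hle v hv hv1 a b c⟩
      (w a b c) ⟨hw a b c, hle w hw hw1 a b c⟩ (by
        rw [Real.dist_eq]
        exact (hvw a b c).trans (div_le_self hτ.le hX))
    rw [Real.dist_eq] at this
    linarith [neg_abs_le ((v a b c).negMulLog - (w a b c).negMulLog)]
  have s1 : ∑ b, ∑ c, (∑ a, v a b c).negMulLog ≤
      ∑ b, ∑ c, ((∑ a, w a b c).negMulLog + ε / C) :=
    Finset.sum_le_sum fun b _ => Finset.sum_le_sum fun c _ => h1 b c
  have s2 : ∑ a, ∑ b, ∑ c, (w a b c).negMulLog ≤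
      ∑ a, ∑ b, ∑ c, ((v a b c).negMulLog + ε / C) :=
    Finset.sum_le_sum fun a _ => Finset.sum_le_sum fun b _ => Finset.sum_le_sum fun c _ => h2 a b c
  simp only [Finset.sum_add_distrib, Finset.sum_const, nsmul_eq_mul, Finset.card_univ] at s1 s2
  have h3 : C * (ε / C) = ε := by field_simp
  have h4 : 0 < ε / C := by positivity
  unfold entropyForm
  nlinarith

theorem sum_comp_eq_sum_card_mul {ι T : Type*} [Fintype ι] [Fintype T] [DecidableEq T]
    (t : ι → T) (f : T → ℝ) :
    ∑ i, f (t i) = ∑ τ, ((Finset.univ.filter fun i => t i = τ).card : ℝ) * f τ := by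
  rw [← Finset.sum_fiberwise Finset.univ t]
  refine Finset.sum_congr rfl fun τ _ => ?_
  rw [← nsmul_eq_mul, ← Finset.sum_const]
  refine Finset.sum_congr rfl fun i hi => ?_
  rw [(Finset.mem_filter.1 hi).2]

/-- Rounding a distribution to a type of denominator `N`, all excess mass going to `c₀`. -/
theorem exists_rounding {Y : Type*} [Fintype Y] [DecidableEq Y] (N : ℕ) {W : Y → ℝ}
    (hW : ∀ c, 0 ≤ W c) (hW1 : ∑ c, W c = 1) (c₀ : Y) :
    ∃ k : Y → ℕ, ∑ c, k c = N ∧ (∀ c ≠ c₀, (k c : ℝ) ≤ N * W c) ∧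
      ∀ c, |(k c : ℝ) - N * W c| ≤ Fintype.card Y := by
  set F : ℕ := ∑ c ∈ Finset.univ.erase c₀, ⌊N * W c⌋₊ with hF
  have hfl : ∀ c, (⌊N * W c⌋₊ : ℝ) ≤ N * W c := fun c =>
    Nat.floor_le (mul_nonneg N.cast_nonneg (hW c))
  have hfl' : ∀ c, N * W c ≤ ⌊N * W c⌋₊ + 1 := fun c => (Nat.lt_floor_add_one _).le
  have hsum : N * W c₀ + ∑ c ∈ Finset.univ.erase c₀, N * W c = N := by
    rw [Finset.add_sum_erase _ (fun c => N * W c) (Finset.mem_univ c₀), ← Finset.mul_sum, hW1,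
      mul_one]
  have hFle : (F : ℝ) ≤ ∑ c ∈ Finset.univ.erase c₀, N * W c := by
    rw [hF, Nat.cast_sum]
    exact Finset.sum_le_sum fun c _ => hfl c
  have hFge : ∑ c ∈ Finset.univ.erase c₀, N * W c ≤ F + Fintype.card Y := by
    calc ∑ c ∈ Finset.univ.erase c₀, N * W c
        ≤ ∑ c ∈ Finset.univ.erase c₀, ((⌊N * W c⌋₊ : ℝ) + 1) :=
          Finset.sum_le_sum fun c _ => hfl' c
      _ = F + (Finset.univ.erase c₀).card := by
          rw [Finset.sum_add_distrib, hF, Nat.cast_sum]; simp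
      _ ≤ F + Fintype.card Y := by
          gcongr
          exact Finset.card_le_univ _
  have hc₀ : 0 ≤ N * W c₀ := mul_nonneg N.cast_nonneg (hW c₀)
  have hFN : F ≤ N := by
    have : (F : ℝ) ≤ N := by linarith
    exact_mod_cast this
  have hY : (1 : ℝ) ≤ Fintype.card Y := by exact_mod_cast Fintype.card_pos_iff.2 ⟨c₀⟩
  refine ⟨fun c => if c = c₀ then N - F else ⌊N * W c⌋₊, ?_, ?_, ?_⟩
  · rw [← Finset.add_sum_erase _ _ (Finset.mem_univ c₀), if_pos rfl,
      Finset.sum_congr rfl fun c hc => if_neg (Finset.ne_of_mem_erase hc)]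
    omega
  · intro c hc
    simpa [hc] using hfl c
  · intro c
    by_cases hc : c = c₀
    · subst hc
      simp only [if_true]
      rw [Nat.cast_sub hFN, abs_le]
      constructor <;> linarith
    · simp only [if_neg hc]
      rw [abs_le]
      constructor <;> linarith [hfl c, hfl' c]

theorem exists_log_le_linear (A B : ℝ) (hA : 0 ≤ A) {ε : ℝ} (hε : 0 < ε) :
    ∃ n₀ : ℕ, ∀ n ≥ n₀, A * Real.log ((n : ℝ) + 1) + B ≤ ε * n := by
  have h1 := (Real.isLittleO_log_id_atTop.bound
    (show 0 < ε / (2 * (A + 1)) by positivity))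
  have h2 : Filter.Tendsto (fun n : ℕ => (n : ℝ) + 1) Filter.atTop Filter.atTop :=
    Filter.tendsto_atTop_add_const_right _ _ tendsto_natCast_atTop_atTop
  have h3 : ∀ᶠ n : ℕ in Filter.atTop, 2 * (B + ε / 2) / ε ≤ (n : ℝ) :=
    tendsto_natCast_atTop_atTop.eventually_ge_atTop _
  obtain ⟨n₀, hn₀⟩ := Filter.eventually_atTop.1 ((h2.eventually h1).and h3)
  refine ⟨n₀, fun n hn => ?_⟩
  obtain ⟨h4, h5⟩ := hn₀ n hn
  have hn1 : (0 : ℝ) < n + 1 := by positivity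
  simp only [id, Real.norm_eq_abs, abs_of_pos hn1] at h4
  have h6 := mul_le_mul_of_nonneg_left ((le_abs_self _).trans h4) hA
  have h7 : A * (ε / (2 * (A + 1)) * (n + 1)) ≤ ε / 2 * (n + 1) := by
    have : A * (ε / (2 * (A + 1)) * (n + 1)) = (A / (A + 1)) * (ε / 2 * (n + 1)) := by
      field_simp
    rw [this]
    exact mul_le_of_le_one_left (by positivity) ((div_le_one (by positivity)).2 (by linarith))
  rw [div_le_iff₀ hε] at h5
  linarith

theorem prod_conditional_eq_exp {X Z Y : Type*} [Fintype X] [Fintype Z] [Fintype Y]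
    [DecidableEq X] [DecidableEq Z] [DecidableEq Y] {n : ℕ} {x : Fin n → X} {z : Fin n → Z}
    {y : Fin n → Y} {N : X → Z → ℕ} {k : X → Z → Y → ℕ} (hk : ∀ a b, ∑ c, k a b c = N a b)
    (hy : ∀ a b c, (Finset.univ.filter fun i => x i = a ∧ z i = b ∧ y i = c).card = k a b c) :
    ∏ i, (∑ a, (k a (z i) (y i) : ℝ)) / (∑ a, (N a (z i) : ℝ)) =
      Real.exp ((∑ b, (∑ a, (N a b : ℝ)).negMulLog) -
        ∑ b, ∑ c, (∑ a, (k a b c : ℝ)).negMulLog) := by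
  have hkR : ∀ a b, ∑ c, (k a b c : ℝ) = N a b := fun a b => by exact_mod_cast hk a b
  have hpos : ∀ i, 0 < k (x i) (z i) (y i) := by
    intro i
    rw [← hy]
    exact Finset.card_pos.2 ⟨i, by simp⟩
  have hK : ∀ i, (0 : ℝ) < ∑ a, (k a (z i) (y i) : ℝ) := fun i =>
    (Nat.cast_pos.2 (hpos i)).trans_le
      (Finset.single_le_sum (f := fun a => (k a (z i) (y i) : ℝ)) (fun a _ => Nat.cast_nonneg _)
        (Finset.mem_univ (x i)))
  have hN : ∀ i, (0 : ℝ) < ∑ a, (N a (z i) : ℝ) := by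
    intro i
    refine (hK i).trans_le (Finset.sum_le_sum fun a _ => ?_)
    rw [← hkR]
    exact Finset.single_le_sum (f := fun c => (k a (z i) c : ℝ)) (fun c _ => Nat.cast_nonneg _)
      (Finset.mem_univ (y i))
  rw [← Real.exp_log (Finset.prod_pos fun i _ => div_pos (hK i) (hN i)),
    Real.log_prod fun i _ => (div_pos (hK i) (hN i)).ne']
  congr 1
  have h1 := sum_comp_eq_sum_card_mul (fun i => (x i, z i, y i)) (fun τ : X × Z × Y =>
    Real.log (∑ a, (k a τ.2.1 τ.2.2 : ℝ)) - Real.log (∑ a, (N a τ.2.1 : ℝ)))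
  simp only [Fintype.sum_prod_type, Prod.mk.injEq, hy] at h1
  rw [Finset.sum_congr rfl fun i _ => Real.log_div (hK i).ne' (hN i).ne', h1]
  simp only [mul_sub, Finset.sum_sub_distrib]
  have e1 : ∑ a, ∑ b, ∑ c, (k a b c : ℝ) * Real.log (∑ a', (k a' b c : ℝ)) =
      -∑ b, ∑ c, (∑ a, (k a b c : ℝ)).negMulLog := by
    rw [Finset.sum_comm]
    simp only [← Finset.sum_neg_distrib]
    refine Finset.sum_congr rfl fun b _ => ?_
    rw [Finset.sum_comm]
    simp only [← Finset.sum_mul, Real.negMulLog, neg_mul, neg_neg]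
  have e2 : ∑ a, ∑ b, ∑ c, (k a b c : ℝ) * Real.log (∑ a', (N a' b : ℝ)) =
      -∑ b, (∑ a, (N a b : ℝ)).negMulLog := by
    simp only [← Finset.sum_mul, hkR]
    rw [Finset.sum_comm]
    simp only [← Finset.sum_mul, Real.negMulLog, neg_mul, Finset.sum_neg_distrib, neg_neg]
  rw [e1, e2]
  ring

theorem type_class_mass_ge {X Z Y : Type*} [Fintype X] [Fintype Z] [Fintype Y]
    [DecidableEq X] [DecidableEq Z] [DecidableEq Y] {n : ℕ} {x : Fin n → X} {z : Fin n → Z}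
    {N : X → Z → ℕ} {k : X → Z → Y → ℕ} (hk : ∀ a b, ∑ c, k a b c = N a b)
    (hN : ∀ a b, (Finset.univ.filter fun i => x i = a ∧ z i = b).card = N a b) :
    Real.exp (-entropyForm (fun a b => (N a b : ℝ)) (fun a b c => (k a b c : ℝ)) -
        Fintype.card X * (Fintype.card Z * Fintype.card Y) * (1 + Real.log (n + 1))) ≤
      ∑ y : Fin n → Y with ∀ a b c,
        (Finset.univ.filter fun i => x i = a ∧ z i = b ∧ y i = c).card = k a b c,
        ∏ i, (∑ a, (k a (z i) (y i) : ℝ)) / (∑ a, (N a (z i) : ℝ)) := by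
  rw [Finset.sum_congr rfl fun y hy =>
    prod_conditional_eq_exp hk (Finset.mem_filter.1 hy).2, Finset.sum_const, nsmul_eq_mul]
  set T := Finset.univ.filter fun y : Fin n → Y => ∀ a b c,
    (Finset.univ.filter fun i => x i = a ∧ z i = b ∧ y i = c).card = k a b c with hT
  have hcard := card_conditional_type_class (fun i => (x i, z i)) (fun σ c => k σ.1 σ.2 c)
    (by rintro ⟨a, b⟩; simp [hk, hN])
  simp only [Prod.forall, Prod.mk.injEq, and_assoc, Fintype.prod_prod_type, hN] at hcard
  rw [← hT] at hcard
  have hTpos : (T.card : ℝ) ≠ 0 := by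
    intro h0
    have h0' : T.card = 0 := by exact_mod_cast h0
    rw [h0', zero_mul] at hcard
    exact (Finset.prod_pos fun a _ => Finset.prod_pos fun b _ =>
      (N a b).factorial_pos).ne hcard
  have hlog := congrArg (fun m : ℕ => Real.log (m : ℝ)) hcard
  have hkn : ∀ a b c, k a b c ≤ n := by
    intro a b c
    refine (Finset.single_le_sum (f := fun c => k a b c) (fun c _ => Nat.zero_le _)
      (Finset.mem_univ c)).trans ?_
    rw [hk, ← hN]
    exact (Finset.card_le_univ _).trans (by simp)
  have hf : ∀ m : ℕ, (m.factorial : ℝ) ≠ 0 := fun m => by positivity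
  simp only [Nat.cast_mul, Nat.cast_prod] at hlog
  rw [Real.log_mul hTpos (by simp [Finset.prod_ne_zero_iff, hf]),
    Real.log_prod (by simp [Finset.prod_ne_zero_iff, hf]),
    Real.log_prod (by simp [Finset.prod_ne_zero_iff, hf])] at hlog
  simp only [Real.log_prod fun i _ => Finset.prod_ne_zero_iff.2 fun j _ => hf _,
    Real.log_prod fun i _ => hf _] at hlog
  have hlow : ∑ a, ∑ b, (-(N a b : ℝ).negMulLog - N a b) ≤
      ∑ a, ∑ b, Real.log ((N a b).factorial : ℝ) :=
    Finset.sum_le_sum fun a _ => Finset.sum_le_sum fun b _ => log_factorial_ge_s16 _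
  have hup : ∑ a, ∑ b, ∑ c, Real.log ((k a b c).factorial : ℝ) ≤
      ∑ a, ∑ b, ∑ c, (-(k a b c : ℝ).negMulLog - k a b c + (1 + Real.log (n + 1))) :=
    Finset.sum_le_sum fun a _ => Finset.sum_le_sum fun b _ => Finset.sum_le_sum fun c _ =>
      log_factorial_le_s16 (hkn a b c)
  have hkR : ∀ a b, ∑ c, (k a b c : ℝ) = N a b := fun a b => by exact_mod_cast hk a b
  simp only [Finset.sum_add_distrib, Finset.sum_sub_distrib, Finset.sum_neg_distrib,
    Finset.sum_const, nsmul_eq_mul, Finset.card_univ, hkR] at hlow hup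
  rw [← Real.exp_log (show (0 : ℝ) < T.card by positivity), ← Real.exp_add]
  refine Real.exp_le_exp.2 ?_
  unfold entropyForm
  linarith

/-- Covering the conditional type class of `N` given `z` through a test channel with joint type `k`. -/
theorem exists_type_cover {X Z Y : Type*} [Fintype X] [Fintype Z] [Fintype Y] [Nonempty X]
    [DecidableEq X] [DecidableEq Z] [DecidableEq Y] {n : ℕ} {z : Fin n → Z}
    {N : X → Z → ℕ} {k : X → Z → Y → ℕ} (hk : ∀ a b, ∑ c, k a b c = N a b)
    (hz : ∀ b, ∑ a, N a b = (Finset.univ.filter fun i => z i = b).card) :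
    ∃ B : Finset (Fin n → Y),
      Real.log B.card ≤ entropyForm (fun a b => (N a b : ℝ)) (fun a b c => (k a b c : ℝ)) +
        Fintype.card X * (Fintype.card Z * Fintype.card Y) * (1 + Real.log (n + 1)) +
        Real.log (n * Real.log (Fintype.card X) + 2) ∧
      ∀ x : Fin n → X,
        (∀ a b, (Finset.univ.filter fun i => x i = a ∧ z i = b).card = N a b) →
        ∃ y ∈ B, ∀ a b c,
          (Finset.univ.filter fun i => x i = a ∧ z i = b ∧ y i = c).card = k a b c := by
  set E : ℝ := entropyForm (fun a b => (N a b : ℝ)) (fun a b c => (k a b c : ℝ)) +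
    Fintype.card X * (Fintype.card Z * Fintype.card Y) * (1 + Real.log (n + 1))
  set μ : (Fin n → Y) → ℝ := fun y =>
    ∏ i, (∑ a, (k a (z i) (y i) : ℝ)) / (∑ a, (N a (z i) : ℝ)) with hμdef
  have hμ : ∀ y, 0 ≤ μ y := fun y => Finset.prod_nonneg fun i _ => by positivity
  have hμ1 : ∑ y, μ y = 1 := by
    simp only [hμdef]
    rw [← Fintype.prod_sum (fun i c => (∑ a, (k a (z i) c : ℝ)) / (∑ a, (N a (z i) : ℝ)))]
    refine Finset.prod_eq_one fun i _ => ?_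
    have hpos : 0 < ∑ a, N a (z i) := by
      rw [hz]
      exact Finset.card_pos.2 ⟨i, by simp⟩
    have hpos' : (0 : ℝ) < ∑ a, (N a (z i) : ℝ) := by exact_mod_cast hpos
    rw [← Finset.sum_div, Finset.sum_comm,
      Finset.sum_congr rfl fun a _ => (by exact_mod_cast hk a (z i) :
        ∑ c, (k a (z i) c : ℝ) = N a (z i)), div_self hpos'.ne']
  set A := Finset.univ.filter fun x : Fin n → X =>
    ∀ a b, (Finset.univ.filter fun i => x i = a ∧ z i = b).card = N a b with hA
  have hp : ∀ x ∈ A, Real.exp (-E) ≤ ∑ y : Fin n → Y with ∀ a b c,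
      (Finset.univ.filter fun i => x i = a ∧ z i = b ∧ y i = c).card = k a b c, μ y := by
    intro x hx
    have := type_class_mass_ge hk (Finset.mem_filter.1 hx).2
    rwa [← neg_add'] at this
  obtain ⟨x₀, hx₀⟩ : A.Nonempty := by
    have hcard := card_conditional_type_class z (fun b a => N a b) hz
    rw [← Finset.card_pos]
    refine Nat.pos_of_ne_zero fun h0 => ?_
    have hA' : (Finset.univ.filter fun x : Fin n → X =>
        ∀ b a, (Finset.univ.filter fun i => z i = b ∧ x i = a).card = N a b) = A := by
      rw [hA]
      ext x
      simp only [Finset.mem_filter, Finset.mem_univ, true_and, and_comm]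
      exact forall_comm
    rw [hA', h0, zero_mul] at hcard
    exact (Finset.prod_pos fun b _ => Nat.factorial_pos _).ne hcard
  have hp1 : Real.exp (-E) ≤ 1 := (hp x₀ hx₀).trans <| hμ1 ▸
    Finset.sum_le_sum_of_subset_of_nonneg (Finset.filter_subset _ _) fun y _ _ => hμ y
  set L : ℝ := n * Real.log (Fintype.card X) + 1 with hL
  have hX : (1 : ℝ) ≤ Fintype.card X := by exact_mod_cast Fintype.card_pos (α := X)
  have hLpos : 0 < L := by
    have := Real.log_nonneg hX
    positivity
  obtain ⟨B, hB, hBc⟩ := exists_covering μ hμ hμ1 A (fun x y => ∀ a b c,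
    (Finset.univ.filter fun i => x i = a ∧ z i = b ∧ y i = c).card = k a b c)
    (Real.exp (-E)) hp1 hp ⌈L * Real.exp E⌉₊
  refine ⟨B, ?_, fun x hx => ?_⟩
  · have hE1 : 1 ≤ Real.exp E := by
      rw [Real.exp_neg] at hp1
      exact (inv_le_one₀ (Real.exp_pos E)).1 hp1
    have h1 : (B.card : ℝ) ≤ (n * Real.log (Fintype.card X) + 2) * Real.exp E := by
      have h2 : (B.card : ℝ) ≤ (⌈L * Real.exp E⌉₊ : ℝ) := by exact_mod_cast hB
      have h3 := Nat.ceil_lt_add_one (show 0 ≤ L * Real.exp E by positivity)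
      have h4 : (n * Real.log (Fintype.card X) + 2) * Real.exp E = L * Real.exp E + Real.exp E := by
        rw [hL]; ring
      linarith
    have h5 : Real.log ((n * Real.log (Fintype.card X) + 2) * Real.exp E) =
        E + Real.log (n * Real.log (Fintype.card X) + 2) := by
      rw [Real.log_mul (by linarith) (Real.exp_pos E).ne', Real.log_exp, add_comm]
    rw [← h5]
    rcases Nat.eq_zero_or_pos B.card with h0 | h0
    · rw [h0, Nat.cast_zero, Real.log_zero]
      exact Real.log_nonneg (one_le_mul_of_one_le_of_one_le (by linarith) hE1)
    · exact Real.log_le_log (by exact_mod_cast h0) h1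
  · by_contra! hcon
    have hunc : 1 ≤ (A.filter fun x => ∀ y ∈ B, ¬ ∀ a b c,
        (Finset.univ.filter fun i => x i = a ∧ z i = b ∧ y i = c).card = k a b c).card := by
      refine Finset.card_pos.2 ⟨x, Finset.mem_filter.2 ⟨by simpa [hA] using hx, fun y hy h => ?_⟩⟩
      obtain ⟨a, b, c, habc⟩ := hcon y hy
      exact habc (h a b c)
    have hunc' := (Nat.one_le_cast (α := ℝ)).2 hunc |>.trans hBc
    have hAc : (A.card : ℝ) ≤ Real.exp (L - 1) := by
      have h1 : A.card ≤ Fintype.card X ^ n := by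
        simpa using Finset.card_le_univ A
      have h2 : Real.exp (L - 1) = (Fintype.card X : ℝ) ^ n := by
        rw [hL, add_sub_cancel_right, Real.exp_nat_mul, Real.exp_log (by linarith)]
      rw [h2]
      exact_mod_cast h1
    have hpow : (1 - Real.exp (-E)) ^ ⌈L * Real.exp E⌉₊ ≤ Real.exp (-L) := by
      calc (1 - Real.exp (-E)) ^ ⌈L * Real.exp E⌉₊
          ≤ (Real.exp (-Real.exp (-E))) ^ ⌈L * Real.exp E⌉₊ :=
            pow_le_pow_left₀ (by linarith) (Real.one_sub_le_exp_neg _) _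
        _ = Real.exp (⌈L * Real.exp E⌉₊ * -Real.exp (-E)) := (Real.exp_nat_mul _ _).symm
        _ ≤ Real.exp (-L) := by
            refine Real.exp_le_exp.2 ?_
            have h1 := mul_le_mul_of_nonneg_right (Nat.le_ceil (L * Real.exp E))
              (Real.exp_pos (-E)).le
            rw [mul_assoc, ← Real.exp_add, add_neg_cancel, Real.exp_zero, mul_one] at h1
            linarith
    have := mul_le_mul hpow hAc (Nat.cast_nonneg _) (Real.exp_pos _).le
    rw [← Real.exp_add, show -L + (L - 1) = -1 by ring] at this
    have hlt : Real.exp (-1) < 1 := by simp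
    linarith

theorem stmt16 {X Z Y : Type*} [Fintype X] [Fintype Z] [Fintype Y]
    [DecidableEq X] [DecidableEq Z] [Nonempty X] [Nonempty Z] [Nonempty Y]
    (d : X → Y → ℝ) (hd : ∀ x y, 0 ≤ d x y)
    (hzero : ∀ x, ∃ y, d x y = 0)
    (δ : ℝ) (hδ : 0 < δ) :
    ∃ n₀ : ℕ, ∀ n ≥ n₀, ∀ z : Fin n → Z, ∀ Q : X → Z → ℝ,
      IsJointProbDist Q →
      (∀ a b, ∃ k : ℕ, Q a b = (k : ℝ) / n) →
      (∀ b, ∑ a, Q a b = empDist z b) →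
      ∀ D : ℝ, 0 ≤ D →
      ∃ B : Finset (Fin n → Y),
        (1 / (n : ℝ)) * Real.log (B.card : ℝ) ≤ condRateDistortion d D Q + δ ∧
        ∀ x : Fin n → X, (∀ a b, jointEmpDist x z a b = Q a b) →
          ∃ y ∈ B, meanDist d x y ≤ D := by
  classical
  choose c₀ hc₀ using hzero
  obtain ⟨ρ, hρ, hcont⟩ := exists_entropyForm_le X Z Y (show 0 < δ / 4 by positivity)
  set C : ℝ := Fintype.card X * (Fintype.card Z * Fintype.card Y) with hC
  have hX : 0 ≤ Real.log (Fintype.card X : ℝ) :=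
    Real.log_nonneg (by exact_mod_cast Fintype.card_pos (α := X))
  obtain ⟨n₁, hn₁⟩ := exists_log_le_linear (C + 1)
    (C + Real.log (Real.log (Fintype.card X) + 2)) (by positivity) (show 0 < δ / 4 by positivity)
  refine ⟨max (max 1 ⌈(Fintype.card Y : ℝ) / ρ⌉₊) n₁, fun n hn z Q hQ hQk hQz D hD => ?_⟩
  have hn1 : 1 ≤ n := (le_max_left _ _).trans ((le_max_left _ _).trans hn)
  have hnρ : (Fintype.card Y : ℝ) / ρ ≤ n :=
    Nat.ceil_le.1 ((le_max_right _ _).trans ((le_max_left _ _).trans hn))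
  have hlin := hn₁ n ((le_max_right _ _).trans hn)
  have hnpos : (0 : ℝ) < n := by exact_mod_cast hn1
  choose N hN using hQk
  have hnQ : ∀ a b, (N a b : ℝ) = n * Q a b := fun a b => by rw [hN]; field_simp
  have hz : ∀ b, ∑ a, N a b = (Finset.univ.filter fun i => z i = b).card := by
    intro b
    have h := hQz b
    simp only [hN, empDist, ← Finset.sum_div] at h
    rw [div_left_inj' hnpos.ne'] at h
    exact_mod_cast h
  obtain ⟨r, ⟨W, hW, hW1, hWD, rfl⟩, hr⟩ := exists_lt_of_csInf_lt
    (s := {r | ∃ W : X → Z → Y → ℝ, (∀ x z y, 0 ≤ W x z y) ∧ (∀ x z, ∑ y, W x z y = 1) ∧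
      (∑ x, ∑ z, ∑ y, Q x z * W x z y * d x y) ≤ D ∧ r = condMutualInfo Q W})
    ⟨_, fun a _ c => if c = c₀ a then 1 else 0, fun a b c => by positivity, by simp,
      by simpa [hc₀] using hD, rfl⟩
    (show _ < condRateDistortion d D Q + δ / 4 from lt_add_of_pos_right _ (by positivity))
  choose k hksum hkle hkabs using fun a b => exists_rounding (N a b) (hW a b) (hW1 a b) (c₀ a)
  obtain ⟨B, hB, hcover⟩ := exists_type_cover hksum hz
  refine ⟨B, ?_, fun x hx => ?_⟩
  · have hv0 : ∀ a b c, 0 ≤ (k a b c : ℝ) / n := fun a b c => by positivity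
    have hw0 : ∀ a b c, 0 ≤ Q a b * W a b c := fun a b c => mul_nonneg (hQ.1 a b) (hW a b c)
    have hQb : ∀ b, ∑ a, Q a b ≤ 1 := by
      intro b
      rw [← hQ.2, Finset.sum_comm]
      exact Finset.single_le_sum (f := fun b => ∑ a, Q a b)
        (fun b _ => Finset.sum_nonneg fun a _ => hQ.1 a b) (Finset.mem_univ b)
    have hvQ : ∀ a b c, (k a b c : ℝ) / n ≤ Q a b := by
      intro a b c
      rw [hN, ← hksum a b]
      gcongr
      exact Finset.single_le_sum (f := k a b) (fun c _ => Nat.zero_le _) (Finset.mem_univ c)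
    have hwQ : ∀ a b c, Q a b * W a b c ≤ Q a b := by
      intro a b c
      refine mul_le_of_le_one_right (hQ.1 a b) ?_
      rw [← hW1 a b]
      exact Finset.single_le_sum (f := W a b) (fun c _ => hW a b c) (Finset.mem_univ c)
    have hclose := hcont Q (fun a b c => (k a b c : ℝ) / n) (fun a b c => Q a b * W a b c)
      hv0 hw0 (fun b c => (Finset.sum_le_sum fun a _ => hvQ a b c).trans (hQb b))
      (fun b c => (Finset.sum_le_sum fun a _ => hwQ a b c).trans (hQb b)) (by
        intro a b c
        have h1 : (k a b c : ℝ) / n - Q a b * W a b c = (k a b c - N a b * W a b c) / n := by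
          rw [hN]; field_simp
        rw [h1, abs_div, abs_of_pos hnpos, div_le_iff₀ hnpos]
        rw [div_le_iff₀ hρ] at hnρ
        linarith [hkabs a b c])
    rw [← condMutualInfo_eq_entropyForm hQ.1 hW hW1] at hclose
    have hscale : entropyForm (fun a b => (N a b : ℝ)) (fun a b c => (k a b c : ℝ)) =
        n * entropyForm Q (fun a b c => (k a b c : ℝ) / n) := by
      rw [← entropyForm_smul]
      congr 1
      · funext a b; exact hnQ a b
      · funext a b c; field_simp
    have hlogX : Real.log (n * Real.log (Fintype.card X) + 2) ≤
        Real.log (n + 1) + Real.log (Real.log (Fintype.card X) + 2) := by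
      rw [← Real.log_mul (by positivity) (by positivity)]
      exact Real.log_le_log (by positivity) (by nlinarith)
    rw [one_div, inv_mul_le_iff₀ hnpos]
    rw [hscale] at hB
    have := mul_le_mul_of_nonneg_left hclose hnpos.le
    have := mul_le_mul_of_nonneg_left hr.le hnpos.le
    nlinarith
  · obtain ⟨y, hyB, hy⟩ := hcover x fun a b => by
      have h := hx a b
      rw [jointEmpDist, hN, div_left_inj' hnpos.ne'] at h
      exact_mod_cast h
    refine ⟨y, hyB, ?_⟩
    have h1 := sum_comp_eq_sum_card_mul (fun i => (x i, z i, y i))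
      (fun τ : X × Z × Y => d τ.1 τ.2.2)
    simp only [Fintype.sum_prod_type, Prod.mk.injEq, hy] at h1
    rw [meanDist, h1, one_div, inv_mul_le_iff₀ hnpos]
    refine le_trans ?_ (mul_le_mul_of_nonneg_left hWD hnpos.le)
    simp only [Finset.mul_sum]
    refine Finset.sum_le_sum fun a _ => Finset.sum_le_sum fun b _ =>
      Finset.sum_le_sum fun c _ => ?_
    by_cases hc : c = c₀ a
    · simp [hc, hc₀]
    · rw [← mul_assoc, ← mul_assoc, ← hnQ]
      exact mul_le_mul_of_nonneg_right (hkle a b c hc) (hd a c)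
end
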